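/- arXiv:1109.1252 — 2 statements merged into one kernel-verified Lean document; each statement's English description precedes it below -/
import Mathlib

section
/- Let φ : ℝ^d → ℝ have continuous partial derivatives up to order k ≥ 2, η : ℝ^d → ℂ be C¹ with compact support in an open ball B, and suppose |∂^k φ / ∂y_j^k(y)| ≥ α > 0 for all y ∈ B and some fixed j. Then |∫_{ℝ^d} e^{iφ(y)} η(y) dy| ≤ (c_k / α^{1/k}) ∫_{ℝ^d} |∂η/∂y_j(y)| dy, with c_k = 5·2^{k−1} − 2. -/
open MeasureTheory

/-!
If `|f'| ≥ μ` and `f'` is monotone on an interval, writing `e^{if} = (1 / f') · (-i e^{if})'` and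
integrating by parts gives `|∫ e^{if}| ≤ 2 / μ`. If `|f^{(k+1)}| ≥ α`, then `|f^{(k)}|` is at least
`α δ` at distance `δ` from some point, so removing an interval of length `2 δ` and optimising `δ`
turns a bound with constant `c` at order `k` into one with constant `2 c + 2` at order `k + 1`.
Starting from `2` at order `1`, the constant at order `k` is `2 ^ (k + 1) - 2`.

An amplitude is inserted by one more integration by parts, against the primitive of the oscillating
factor based at a point of the support: only values of the phase between points of the support
matter, so a lower bound on a convex set suffices. Fubini along the lines parallel to a fixed
direction reduces the higher-dimensional estimate to this one.
-/

section OneDimensional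

open Set

variable {E : Type*} [NormedAddCommGroup E] [NormedSpace ℝ E] {a b α : ℝ}

theorem forall_le_or_forall_le_neg_of_le_abs {X : Type*} [TopologicalSpace X] {s : Set X}
    (hs : IsPreconnected s) {g : X → ℝ} (hg : ContinuousOn g s) (hα : 0 < α)
    (h : ∀ x ∈ s, α ≤ |g x|) : (∀ x ∈ s, α ≤ g x) ∨ ∀ x ∈ s, g x ≤ -α := by
  by_contra! ⟨⟨x, hx, hgx⟩, ⟨y, hy, hgy⟩⟩
  have hgx_nonpos : g x ≤ 0 := by
    rcases le_abs.1 (h x hx) with h' | h' <;> linarith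
  have hgy_nonneg : 0 ≤ g y := by
    rcases le_abs.1 (h y hy) with h' | h' <;> linarith
  obtain ⟨z, hz, hgz⟩ := hs.intermediate_value hx hy hg ⟨hgx_nonpos, hgy_nonneg⟩
  have := h z hz
  rw [hgz, abs_zero] at this
  exact hα.not_ge this

theorem integral_abs_deriv_eq_abs_sub {u u' : ℝ → ℝ} (hab : a ≤ b)
    (hu : ∀ x ∈ Icc a b, HasDerivAt u (u' x) x) (hu' : IntervalIntegrable u' volume a b)
    (hsign : (∀ x ∈ Icc a b, 0 ≤ u' x) ∨ ∀ x ∈ Icc a b, u' x ≤ 0) :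
    ∫ x in a..b, |u' x| = |u b - u a| := by
  rw [← uIcc_of_le hab] at hu
  rw [← intervalIntegral.integral_eq_sub_of_hasDerivAt hu hu']
  rcases hsign with hpos | hneg
  · rw [abs_of_nonneg (intervalIntegral.integral_nonneg hab hpos)]
    refine intervalIntegral.integral_congr fun x hx ↦ abs_of_nonneg (hpos x ?_)
    rwa [uIcc_of_le hab] at hx
  · have hnonpos : ∫ x in a..b, u' x ≤ 0 := by
      simpa using intervalIntegral.integral_mono_on hab hu' (by simp) hneg
    rw [abs_of_nonpos hnonpos, ← intervalIntegral.integral_neg]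
    refine intervalIntegral.integral_congr fun x hx ↦ abs_of_nonpos (hneg x ?_)
    rwa [uIcc_of_le hab] at hx

theorem norm_integral_smul_deriv_le [CompleteSpace E] {u u' : ℝ → ℝ} {v v' : ℝ → E} (hab : a ≤ b)
    (hu : ∀ x ∈ Icc a b, HasDerivAt u (u' x) x) (hv : ∀ x ∈ Icc a b, HasDerivAt v (v' x) x)
    (hu' : IntervalIntegrable u' volume a b) (hv' : IntervalIntegrable v' volume a b)
    (hv_norm : ∀ x ∈ Icc a b, ‖v x‖ ≤ 1) :
    ‖∫ x in a..b, u x • v' x‖ ≤ |u a| + |u b| + ∫ x in a..b, |u' x| := by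
  have hboundary : ∀ x ∈ Icc a b, ‖u x • v x‖ ≤ |u x| := fun x hx ↦ by
    rw [norm_smul, Real.norm_eq_abs]
    exact mul_le_of_le_one_right (abs_nonneg _) (hv_norm x hx)
  have hintegral : ‖∫ x in a..b, u' x • v x‖ ≤ ∫ x in a..b, |u' x| := by
    refine intervalIntegral.norm_integral_le_of_norm_le hab (.of_forall fun x hx ↦ ?_) hu'.abs
    rw [norm_smul, Real.norm_eq_abs]
    exact mul_le_of_le_one_right (abs_nonneg _) (hv_norm x (Ioc_subset_Icc_self hx))
  rw [← uIcc_of_le hab] at hu hv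
  rw [intervalIntegral.integral_smul_deriv_eq_deriv_smul hu hv hu' hv']
  calc ‖u b • v b - u a • v a - ∫ x in a..b, u' x • v x‖
      ≤ ‖u b • v b‖ + ‖u a • v a‖ + ‖∫ x in a..b, u' x • v x‖ :=
        (norm_sub_le _ _).trans (by gcongr; exact norm_sub_le _ _)
    _ ≤ |u a| + |u b| + ∫ x in a..b, |u' x| := by
        linarith [hboundary a (left_mem_Icc.2 hab), hboundary b (right_mem_Icc.2 hab)]

theorem abs_add_abs_add_abs_sub_le_of_inv {x y μ : ℝ} (hμ : 0 < μ)
    (h : (μ ≤ x ∧ μ ≤ y) ∨ (x ≤ -μ ∧ y ≤ -μ)) :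
    |x⁻¹| + |y⁻¹| + |y⁻¹ - x⁻¹| ≤ 2 / μ := by
  wlog hpos : μ ≤ x ∧ μ ≤ y generalizing x y
  · have hneg := h.resolve_left hpos
    have := this (x := -x) (y := -y) (.inl ⟨by linarith, by linarith⟩) ⟨by linarith, by linarith⟩
    rwa [inv_neg, inv_neg, abs_neg, abs_neg, neg_sub_neg, abs_sub_comm] at this
  have hx : 0 < x⁻¹ := inv_pos.2 (hμ.trans_le hpos.1)
  have hy : 0 < y⁻¹ := inv_pos.2 (hμ.trans_le hpos.2)
  have hxμ : x⁻¹ ≤ μ⁻¹ := inv_anti₀ hμ hpos.1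
  have hyμ : y⁻¹ ≤ μ⁻¹ := inv_anti₀ hμ hpos.2
  rw [abs_of_pos hx, abs_of_pos hy, div_eq_mul_inv]
  rcases abs_cases (y⁻¹ - x⁻¹) with h' | h' <;> linarith

theorem norm_integral_exp_le_two_div {f f' f'' : ℝ → ℝ} {μ : ℝ} (hab : a ≤ b)
    (hf : ∀ x ∈ Icc a b, HasDerivAt f (f' x) x) (hf' : ∀ x ∈ Icc a b, HasDerivAt f' (f'' x) x)
    (hf'' : ContinuousOn f'' (Icc a b)) (hμ : 0 < μ) (hμf' : ∀ x ∈ Icc a b, μ ≤ |f' x|)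
    (hsign : (∀ x ∈ Icc a b, 0 ≤ f'' x) ∨ ∀ x ∈ Icc a b, f'' x ≤ 0) :
    ‖∫ t in a..b, Complex.exp (Complex.I * f t)‖ ≤ 2 / μ := by
  have hf_cont : ContinuousOn f (Icc a b) := HasDerivAt.continuousOn hf
  have hf'_cont : ContinuousOn f' (Icc a b) := HasDerivAt.continuousOn hf'
  have hne : ∀ x ∈ Icc a b, f' x ≠ 0 := fun x hx ↦ abs_pos.1 (hμ.trans_le (hμf' x hx))
  let u' : ℝ → ℝ := fun x ↦ -f'' x / f' x ^ 2
  let v : ℝ → ℂ := fun x ↦ -Complex.I * Complex.exp (Complex.I * f x)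
  let v' : ℝ → ℂ := fun x ↦ f' x * Complex.exp (Complex.I * f x)
  have hu : ∀ x ∈ Icc a b, HasDerivAt (fun x ↦ (f' x)⁻¹) (u' x) x := fun x hx ↦
    (hf' x hx).fun_inv (hne x hx)
  have hv : ∀ x ∈ Icc a b, HasDerivAt v (v' x) x := fun x hx ↦ by
    refine (((hf x hx).ofReal_comp.const_mul Complex.I).cexp.const_mul (-Complex.I)).congr_deriv ?_
    linear_combination (-f' x * Complex.exp (Complex.I * f x)) * Complex.I_mul_I
  have hu' : IntervalIntegrable u' volume a b :=
    ContinuousOn.intervalIntegrable_of_Icc hab <|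
      hf''.neg.div (hf'_cont.pow 2) fun x hx ↦ pow_ne_zero 2 (hne x hx)
  have hv' : IntervalIntegrable v' volume a b :=
    ContinuousOn.intervalIntegrable_of_Icc hab (by fun_prop)
  have hv_norm : ∀ x ∈ Icc a b, ‖v x‖ ≤ 1 := fun x _ ↦ by
    simp [v, Complex.norm_exp_I_mul_ofReal]
  have hu'_sign : (∀ x ∈ Icc a b, 0 ≤ u' x) ∨ ∀ x ∈ Icc a b, u' x ≤ 0 :=
    hsign.symm.imp
      (fun h x hx ↦ div_nonneg (neg_nonneg.2 (h x hx)) (sq_nonneg _))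
      (fun h x hx ↦ div_nonpos_of_nonpos_of_nonneg (neg_nonpos.2 (h x hx)) (sq_nonneg _))
  have hendpoints : (μ ≤ f' a ∧ μ ≤ f' b) ∨ (f' a ≤ -μ ∧ f' b ≤ -μ) := by
    have ha := left_mem_Icc.2 hab
    have hb := right_mem_Icc.2 hab
    exact (forall_le_or_forall_le_neg_of_le_abs isPreconnected_Icc hf'_cont hμ hμf').imp
      (fun h ↦ ⟨h a ha, h b hb⟩) (fun h ↦ ⟨h a ha, h b hb⟩)
  calc ‖∫ t in a..b, Complex.exp (Complex.I * f t)‖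
      = ‖∫ t in a..b, (f' t)⁻¹ • v' t‖ := by
        congr 1
        refine intervalIntegral.integral_congr fun x hx ↦ ?_
        rw [uIcc_of_le hab] at hx
        have : (f' x : ℂ) ≠ 0 := mod_cast hne x hx
        simp [v', this]
    _ ≤ |(f' a)⁻¹| + |(f' b)⁻¹| + ∫ x in a..b, |u' x| :=
        norm_integral_smul_deriv_le hab hu hv hu' hv' hv_norm
    _ = |(f' a)⁻¹| + |(f' b)⁻¹| + |(f' b)⁻¹ - (f' a)⁻¹| := by
        rw [integral_abs_deriv_eq_abs_sub hab hu hu' hu'_sign]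
    _ ≤ 2 / μ := abs_add_abs_add_abs_sub_le_of_inv hμ hendpoints

theorem exists_forall_mul_abs_sub_le_abs {g : ℝ → ℝ} (hab : a ≤ b) (hg : ContinuousOn g (Icc a b))
    (hslope : ∀ x ∈ Icc a b, ∀ y ∈ Icc a b, x ≤ y → α * (y - x) ≤ g y - g x) :
    ∃ c ∈ Icc a b, ∀ x ∈ Icc a b, α * |x - c| ≤ |g x| := by
  have right_of {c x : ℝ} (hc : c ∈ Icc a b) (hx : x ∈ Icc a b) (hgc : 0 ≤ g c) (hcx : c ≤ x) :
      α * |x - c| ≤ |g x| := by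
    rw [abs_of_nonneg (sub_nonneg.2 hcx)]
    linarith [hslope c hc x hx hcx, le_abs_self (g x)]
  have left_of {c x : ℝ} (hc : c ∈ Icc a b) (hx : x ∈ Icc a b) (hgc : g c ≤ 0) (hxc : x ≤ c) :
      α * |x - c| ≤ |g x| := by
    rw [abs_sub_comm, abs_of_nonneg (sub_nonneg.2 hxc)]
    linarith [hslope x hx c hc hxc, neg_le_abs (g x)]
  have ha := left_mem_Icc.2 hab
  have hb := right_mem_Icc.2 hab
  rcases le_total 0 (g a) with hga | hga
  · exact ⟨a, ha, fun x hx ↦ right_of ha hx hga hx.1⟩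
  rcases le_total (g b) 0 with hgb | hgb
  · exact ⟨b, hb, fun x hx ↦ left_of hb hx hgb hx.2⟩
  obtain ⟨c, hc, hgc⟩ := intermediate_value_Icc hab hg ⟨hga, hgb⟩
  exact ⟨c, hc, fun x hx ↦ (le_total c x).elim (right_of hc hx hgc.ge) (left_of hc hx hgc.le)⟩

theorem exists_forall_mul_abs_sub_le_abs_of_le_abs_deriv {g : ℝ → ℝ} (hab : a ≤ b)
    (hg : Differentiable ℝ g) (hg' : ContinuousOn (deriv g) (Icc a b)) (hα : 0 < α)
    (h : ∀ x ∈ Icc a b, α ≤ |deriv g x|) :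
    ∃ c ∈ Icc a b, ∀ x ∈ Icc a b, α * |x - c| ≤ |g x| := by
  have of_le_deriv {g : ℝ → ℝ} (hg : Differentiable ℝ g) (h : ∀ x ∈ Icc a b, α ≤ deriv g x) :
      ∃ c ∈ Icc a b, ∀ x ∈ Icc a b, α * |x - c| ≤ |g x| :=
    exists_forall_mul_abs_sub_le_abs hab hg.continuous.continuousOn <|
      (convex_Icc a b).mul_sub_le_image_sub_of_le_deriv hg.continuous.continuousOn
        hg.differentiableOn fun x hx ↦ h x (interior_subset hx)
  rcases forall_le_or_forall_le_neg_of_le_abs isPreconnected_Icc hg' hα h with hpos | hneg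
  · exact of_le_deriv hg hpos
  · simpa only [Pi.neg_apply, abs_neg] using of_le_deriv hg.neg fun x hx ↦ by
      rw [deriv.neg]
      exact le_neg_of_le_neg (hneg x hx)

theorem norm_integral_le_two_mul_add_two_mul {e : ℝ → E} {c δ M : ℝ} (he : Continuous e)
    (he_norm : ∀ t, ‖e t‖ ≤ 1) (hc : c ∈ Icc a b) (hδ : 0 ≤ δ) (hM : 0 ≤ M)
    (hfar : ∀ u v, a ≤ u → u ≤ v → v ≤ b → (∀ x ∈ Icc u v, δ ≤ |x - c|) →
      ‖∫ t in u..v, e t‖ ≤ M) :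
    ‖∫ t in a..b, e t‖ ≤ 2 * M + 2 * δ := by
  obtain ⟨hac, hcb⟩ := hc
  obtain ⟨u, huc, hδu, hleft⟩ : ∃ u, u ≤ c ∧ c - δ ≤ u ∧ ‖∫ t in a..u, e t‖ ≤ M := by
    rcases le_total (c - δ) a with h | h
    · exact ⟨a, hac, h, by simpa using hM⟩
    · refine ⟨c - δ, by linarith, le_rfl, hfar _ _ le_rfl h (by linarith) fun x hx ↦ ?_⟩
      linarith [neg_le_abs (x - c), hx.2]
  obtain ⟨v, hcv, hvδ, hright⟩ : ∃ v, c ≤ v ∧ v ≤ c + δ ∧ ‖∫ t in v..b, e t‖ ≤ M := by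
    rcases le_total b (c + δ) with h | h
    · exact ⟨b, hcb, h, by simpa using hM⟩
    · refine ⟨c + δ, by linarith, le_rfl, hfar _ _ (by linarith) h le_rfl fun x hx ↦ ?_⟩
      linarith [le_abs_self (x - c), hx.1]
  have hmid : ‖∫ t in u..v, e t‖ ≤ 2 * δ := by
    have := intervalIntegral.norm_integral_le_of_norm_le_const (a := u) (b := v)
      fun x _ ↦ he_norm x
    rw [abs_of_nonneg (by linarith)] at this
    linarith
  have hint (x y : ℝ) : IntervalIntegrable e volume x y := he.intervalIntegrable x y
  rw [← intervalIntegral.integral_add_adjacent_intervals (hint a v) (hint v b),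
    ← intervalIntegral.integral_add_adjacent_intervals (hint a u) (hint u v)]
  linarith [norm_add₃_le (a := ∫ t in a..u, e t) (b := ∫ t in u..v, e t) (c := ∫ t in v..b, e t)]

theorem div_rpow_inv_succ_rpow_inv {p : ℝ} (hα : 0 < α) (hp : 0 < p) :
    (α / α ^ (1 / (p + 1))) ^ (1 / p) = α ^ (1 / (p + 1)) := by
  have hexp : (1 - 1 / (p + 1)) * (1 / p) = 1 / (p + 1) := by field_simp; ring
  nth_rw 1 [← Real.rpow_one α]
  rw [← Real.rpow_sub hα, ← Real.rpow_mul hα.le, hexp]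

theorem norm_integral_le_of_le_abs_deriv {e : ℝ → E} {g : ℝ → ℝ} {C : ℝ} {k : ℕ}
    (he : Continuous e) (he_norm : ∀ t, ‖e t‖ ≤ 1) (hab : a ≤ b) (hg : Differentiable ℝ g)
    (hg' : ContinuousOn (deriv g) (Icc a b)) (hα : 0 < α) (hαg : ∀ x ∈ Icc a b, α ≤ |deriv g x|)
    (hk : 0 < k) (hC : 0 ≤ C)
    (hsub : ∀ u v μ, a ≤ u → u ≤ v → v ≤ b → 0 < μ → (∀ x ∈ Icc u v, μ ≤ |g x|) →
      ‖∫ t in u..v, e t‖ ≤ C / μ ^ ((1 : ℝ) / k)) :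
    ‖∫ t in a..b, e t‖ ≤ (2 * C + 2) / α ^ ((1 : ℝ) / (k + 1 : ℕ)) := by
  obtain ⟨c, hc, hcg⟩ := exists_forall_mul_abs_sub_le_abs_of_le_abs_deriv hab hg hg' hα hαg
  -- `δ = 1 / ρ` balances the length `2 δ` of the interval around `c` against the bound
  -- `C / (α δ) ^ (1 / k)` on either side of it.
  set ρ : ℝ := α ^ ((1 : ℝ) / (k + 1 : ℕ)) with hρ
  have hρ_pos : 0 < ρ := Real.rpow_pos_of_pos hα _
  have hbalance : (α / ρ) ^ ((1 : ℝ) / k) = ρ := by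
    rw [hρ, Nat.cast_succ]
    exact div_rpow_inv_succ_rpow_inv hα (Nat.cast_pos.2 hk)
  have hfar : ∀ u v, a ≤ u → u ≤ v → v ≤ b → (∀ x ∈ Icc u v, 1 / ρ ≤ |x - c|) →
      ‖∫ t in u..v, e t‖ ≤ C / ρ := fun u v hau huv hvb hdist ↦ by
    rw [← hbalance]
    refine hsub u v _ hau huv hvb (div_pos hα hρ_pos) fun x hx ↦ ?_
    calc α / ρ = α * (1 / ρ) := by ring
      _ ≤ α * |x - c| := by gcongr; exact hdist x hx
      _ ≤ |g x| := hcg x ⟨hau.trans hx.1, hx.2.trans hvb⟩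
  calc ‖∫ t in a..b, e t‖ ≤ 2 * (C / ρ) + 2 * (1 / ρ) :=
        norm_integral_le_two_mul_add_two_mul he he_norm hc (by positivity) (by positivity) hfar
    _ = (2 * C + 2) / ρ := by ring

theorem norm_integral_exp_le_of_le_abs_iteratedDeriv {f : ℝ → ℝ} {k : ℕ} (hk : 2 ≤ k)
    (hf : ContDiff ℝ k f) (hα : 0 < α) (hαf : ∀ x ∈ uIcc a b, α ≤ |iteratedDeriv k f x|) :
    ‖∫ t in a..b, Complex.exp (Complex.I * f t)‖ ≤ (2 ^ (k + 1) - 2) / α ^ ((1 : ℝ) / k) := by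
  wlog hab : a ≤ b generalizing a b
  · rw [intervalIntegral.integral_symm, norm_neg]
    exact this (by rwa [uIcc_comm]) (le_of_not_ge hab)
  rw [uIcc_of_le hab] at hαf
  have he : Continuous fun t ↦ Complex.exp (Complex.I * f t) := by
    have := hf.continuous
    fun_prop
  have he_norm (t : ℝ) : ‖Complex.exp (Complex.I * f t)‖ ≤ 1 :=
    (Complex.norm_exp_I_mul_ofReal _).le
  induction k, hk using Nat.le_induction generalizing a b α with
  | base =>
    have hf' : ContDiff ℝ 1 (deriv f) := (contDiff_succ_iff_deriv (n := 1).1 hf).2.2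
    have hf'' : Continuous (deriv (deriv f)) := hf'.continuous_deriv le_rfl
    simp only [iteratedDeriv_succ, iteratedDeriv_zero] at hαf
    have hsign := forall_le_or_forall_le_neg_of_le_abs isPreconnected_Icc hf''.continuousOn hα hαf
    convert norm_integral_le_of_le_abs_deriv he he_norm hab (hf'.differentiable one_ne_zero)
      hf''.continuousOn hα hαf one_pos zero_le_two fun u v μ hau huv hvb hμ hμf' ↦ ?_ using 2
    · norm_num
    · have hsubset : Icc u v ⊆ Icc a b := Icc_subset_Icc hau hvb
      simpa using norm_integral_exp_le_two_div huv
        (fun x _ ↦ (hf.differentiable two_ne_zero x).hasDerivAt)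
        (fun x _ ↦ (hf'.differentiable one_ne_zero x).hasDerivAt) hf''.continuousOn hμ hμf'
        (hsign.imp (fun h x hx ↦ hα.le.trans (h x (hsubset hx)))
          (fun h x hx ↦ (h x (hsubset hx)).trans (neg_nonpos.2 hα.le)))
  | succ k hk ih =>
    have hfk : ContDiff ℝ k f := hf.of_le (mod_cast k.le_succ)
    have hC : (0 : ℝ) ≤ 2 ^ (k + 1) - 2 :=
      sub_nonneg.2 (le_self_pow₀ one_le_two k.succ_ne_zero)
    have hcont := hf.continuous_iteratedDeriv (k + 1) le_rfl
    rw [iteratedDeriv_succ] at hαf hcont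
    convert norm_integral_le_of_le_abs_deriv he he_norm hab
      (hf.differentiable_iteratedDeriv k (mod_cast k.lt_succ_self)) hcont.continuousOn hα hαf
      (by lia) hC fun u v μ _ huv _ hμ hμf ↦ ih hfk hμ hμf huv using 2
    ring

variable {F : Type*} [NormedAddCommGroup F] [NormedSpace ℂ F]

theorem norm_integral_smul_le_of_norm_intervalIntegral_le {e : ℝ → ℂ} {g : ℝ → F} {C : ℝ}
    (he : Continuous e) (hg : ContDiff ℝ 1 g) (hg_supp : HasCompactSupport g)
    (hC : ∀ x ∈ tsupport g, ∀ y ∈ tsupport g, ‖∫ t in x..y, e t‖ ≤ C) :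
    ‖∫ t, e t • g t‖ ≤ C * ∫ t, ‖deriv g t‖ := by
  rcases (tsupport g).eq_empty_or_nonempty with hempty | ⟨x₀, hx₀⟩
  · simp [tsupport_eq_empty_iff.1 hempty]
  let P : ℝ → ℂ := fun x ↦ ∫ t in x₀..x, e t
  have hP (x : ℝ) : HasDerivAt P (e x) x := he.integral_hasStrictDerivAt x₀ x |>.hasDerivAt
  have hP_cont : Continuous P := continuous_iff_continuousAt.2 fun x ↦ (hP x).continuousAt
  have hg' : Continuous (deriv g) := hg.continuous_deriv le_rfl
  have hg'_supp : HasCompactSupport (deriv g) := hg_supp.deriv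
  have hparts : ∫ t, e t • g t = -∫ t, P t • deriv g t := by
    have hP_smul : Integrable fun t ↦ P t • deriv g t :=
      (hP_cont.smul hg').integrable_of_hasCompactSupport hg'_supp.smul_left
    have he_smul : Integrable fun t ↦ e t • g t :=
      (he.smul hg.continuous).integrable_of_hasCompactSupport hg_supp.smul_left
    have hPg : Integrable fun t ↦ P t • g t :=
      (hP_cont.smul hg.continuous).integrable_of_hasCompactSupport hg_supp.smul_left
    refine (neg_eq_iff_eq_neg.2 ?_).symm
    exact integral_bilinear_hasDerivAt_right_eq_neg_left_of_integrable
      (L := ContinuousLinearMap.lsmul ℝ ℂ) (fun x _ ↦ hP x)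
      (fun x _ ↦ (hg.differentiable one_ne_zero x).hasDerivAt) hP_smul he_smul hPg
  have hbound (t : ℝ) : ‖P t • deriv g t‖ ≤ C * ‖deriv g t‖ := by
    by_cases ht : t ∈ tsupport g
    · rw [norm_smul]
      gcongr
      exact hC x₀ hx₀ t ht
    · simp [Function.notMem_support.1 fun h ↦ ht (support_deriv_subset h)]
  rw [hparts, norm_neg, ← integral_const_mul]
  exact norm_integral_le_of_norm_le
    ((hg'.norm.integrable_of_hasCompactSupport hg'_supp.norm).const_mul C) (.of_forall hbound)

theorem norm_integral_exp_smul_le_of_le_abs_iteratedDeriv {f : ℝ → ℝ} {k : ℕ} (hk : 2 ≤ k)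
    (hf : ContDiff ℝ k f) {g : ℝ → F} (hg : ContDiff ℝ 1 g) (hg_supp : HasCompactSupport g)
    {s : Set ℝ} (hs : s.OrdConnected) (hgs : tsupport g ⊆ s) (hα : 0 < α)
    (hαf : ∀ x ∈ s, α ≤ |iteratedDeriv k f x|) :
    ‖∫ t, Complex.exp (Complex.I * f t) • g t‖ ≤
      (2 ^ (k + 1) - 2) / α ^ ((1 : ℝ) / k) * ∫ t, ‖deriv g t‖ := by
  have := hf.continuous
  exact norm_integral_smul_le_of_norm_intervalIntegral_le (by fun_prop) hg hg_supp
    fun x hx y hy ↦ norm_integral_exp_le_of_le_abs_iteratedDeriv hk hf hα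
      fun z hz ↦ hαf z (hs.uIcc_subset (hgs hx) (hgs hy) hz)

end OneDimensional

section Lines

open Measure Module

variable {V E : Type*} [NormedAddCommGroup V] [NormedSpace ℝ V] [NormedAddCommGroup E]
  [NormedSpace ℝ E]

theorem iteratedDeriv_comp_add_smul {n : WithTop ℕ∞} {k : ℕ} {φ : V → E} (hφ : ContDiff ℝ n φ)
    (hk : k ≤ n) (w v : V) (t : ℝ) :
    iteratedDeriv k (fun s : ℝ ↦ φ (w + s • v)) t =
      iteratedFDeriv ℝ k φ (w + t • v) fun _ ↦ v := by
  have hline : (fun s : ℝ ↦ φ (w + s • v)) =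
      (fun z ↦ φ (w + z)) ∘ ContinuousLinearMap.toSpanSingleton ℝ v := by
    ext s; simp
  have hshift : ContDiff ℝ n fun z ↦ φ (w + z) := hφ.comp (contDiff_const.add contDiff_id)
  rw [iteratedDeriv_eq_iteratedFDeriv, hline,
    ContinuousLinearMap.iteratedFDeriv_comp_right _ hshift t hk, iteratedFDeriv_comp_add_left]
  simp

theorem deriv_comp_add_smul {η : V → E} (hη : Differentiable ℝ η) (w v : V) (t : ℝ) :
    deriv (fun s : ℝ ↦ η (w + s • v)) t = fderiv ℝ η (w + t • v) v := by
  have hline : HasDerivAt (fun s : ℝ ↦ w + s • v) v t := by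
    simpa using ((hasDerivAt_id t).smul_const v).const_add w
  exact ((hη _).hasFDerivAt.comp_hasDerivAt t hline).deriv

theorem norm_integral_prod_le_of_forall {X Y : Type*} [MeasurableSpace X] [MeasurableSpace Y]
    {μ : Measure X} {ν : Measure Y} [SFinite μ] [SFinite ν] {f : X × Y → E} {g : X × Y → ℝ}
    (hf : Integrable f (μ.prod ν)) (hg : Integrable g (μ.prod ν))
    (h : ∀ x, ‖∫ y, f (x, y) ∂ν‖ ≤ ∫ y, g (x, y) ∂ν) :
    ‖∫ z, f z ∂μ.prod ν‖ ≤ ∫ z, g z ∂μ.prod ν := by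
  rw [integral_prod _ hf, integral_prod _ hg]
  exact norm_integral_le_of_norm_le hg.integral_prod_left (.of_forall h)

variable {v : V}

theorem norm_integral_exp_smul_line_le {F : Type*} [NormedAddCommGroup F] [NormedSpace ℂ F] {k : ℕ}
    (hk : 2 ≤ k) {φ : V → ℝ} (hφ : ContDiff ℝ k φ) {η : V → F} (hη : ContDiff ℝ 1 η)
    (hη_supp : HasCompactSupport η) {s : Set V} (hs : Convex ℝ s) (hηs : tsupport η ⊆ s)
    (hv : v ≠ 0) {α : ℝ} (hα : 0 < α) (hαφ : ∀ y ∈ s, α ≤ |iteratedFDeriv ℝ k φ y fun _ ↦ v|)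
    (w : V) :
    ‖∫ t : ℝ, Complex.exp (Complex.I * φ (w + t • v)) • η (w + t • v)‖ ≤
      (2 ^ (k + 1) - 2) / α ^ ((1 : ℝ) / k) * ∫ t : ℝ, ‖fderiv ℝ η (w + t • v) v‖ := by
  let line : ℝ → V := fun t ↦ w + t • v
  have hline : Topology.IsClosedEmbedding line :=
    (Homeomorph.addLeft w).isClosedEmbedding.comp (isClosedEmbedding_smul_left hv)
  have hs_line : Convex ℝ (line ⁻¹' s) :=
    (hs.translate_preimage_right w).is_linear_preimage (LinearMap.toSpanSingleton ℝ V v).isLinear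
  have hη_line : tsupport (η ∘ line) ⊆ line ⁻¹' s :=
    (tsupport_comp_subset_preimage η hline.continuous).trans (Set.preimage_mono hηs)
  have hαφ_line : ∀ t ∈ line ⁻¹' s, α ≤ |iteratedDeriv k (φ ∘ line) t| := fun t ht ↦
    (hαφ _ ht).trans_eq (congrArg _ (iteratedDeriv_comp_add_smul hφ le_rfl w v t).symm)
  simp only [← deriv_comp_add_smul (hη.differentiable one_ne_zero) w v]
  exact norm_integral_exp_smul_le_of_le_abs_iteratedDeriv hk (hφ.comp (by fun_prop))
    (hη.comp (by fun_prop)) (hη_supp.comp_isClosedEmbedding hline) hs_line.ordConnected hη_line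
    hα hαφ_line

variable [FiniteDimensional ℝ V]

theorem exists_continuousLinearEquiv_prod_apply_eq (hv : v ≠ 0) :
    ∃ L : ((Fin (finrank ℝ V - 1) → ℝ) × ℝ) ≃L[ℝ] V, L (0, 1) = v := by
  have : Nontrivial V := nontrivial_of_ne v 0 hv
  have hrank : finrank ℝ ((Fin (finrank ℝ V - 1) → ℝ) × ℝ) = finrank ℝ V := by
    simpa using Nat.sub_add_cancel finrank_pos
  let L₀ := ContinuousLinearEquiv.ofFinrankEq hrank
  obtain ⟨M, hM⟩ : ∃ M : V ≃L[ℝ] V, M (L₀ (0, 1)) = v :=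
    SeparatingDual.exists_continuousLinearEquiv_apply_eq (by simp) hv
  exact ⟨L₀.trans M, hM⟩

variable [MeasurableSpace V] [BorelSpace V] {μ : Measure V} [IsAddHaarMeasure μ]

theorem norm_integral_le_of_forall_line {f : V → E} {g : V → ℝ} (hv : v ≠ 0)
    (hf : Integrable f μ) (hg : Integrable g μ)
    (h : ∀ w, ‖∫ t : ℝ, f (w + t • v)‖ ≤ ∫ t : ℝ, g (w + t • v)) :
    ‖∫ y, f y ∂μ‖ ≤ ∫ y, g y ∂μ := by
  obtain ⟨L, hL⟩ := exists_continuousLinearEquiv_prod_apply_eq hv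
  have hL_apply (x : Fin (finrank ℝ V - 1) → ℝ) (t : ℝ) : L (x, t) = L (x, 0) + t • v := by
    rw [← hL, ← map_smul, ← map_add]
    simp
  have hL_emb : MeasurableEmbedding L := L.toHomeomorph.measurableEmbedding
  let ν : Measure V := (volume.prod volume).map L
  have hν : ν = addHaarScalarFactor ν μ • μ := isAddLeftInvariant_eq_smul _ _
  have hf_ν : Integrable f ν := hν ▸ hf.smul_measure_nnreal
  have hg_ν : Integrable g ν := hν ▸ hg.smul_measure_nnreal
  have hle : ‖∫ y, f y ∂ν‖ ≤ ∫ y, g y ∂ν := by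
    rw [hL_emb.integral_map, hL_emb.integral_map]
    refine norm_integral_prod_le_of_forall (hL_emb.integrable_map_iff.1 hf_ν)
      (hL_emb.integrable_map_iff.1 hg_ν) fun x ↦ ?_
    simpa only [← hL_apply] using h (L (x, 0))
  rw [isAddLeftInvariant_eq_smul μ ν, integral_smul_nnreal_measure, integral_smul_nnreal_measure,
    NNReal.smul_def, norm_smul_of_nonneg (NNReal.coe_nonneg _)]
  exact smul_le_smul_of_nonneg_left hle (NNReal.coe_nonneg _)

end Lines

theorem van_der_corput_multidim_general {V F : Type*} [NormedAddCommGroup V] [NormedSpace ℝ V]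
    [FiniteDimensional ℝ V] [MeasurableSpace V] [BorelSpace V] {μ : Measure V}
    [μ.IsAddHaarMeasure] [NormedAddCommGroup F] [NormedSpace ℂ F] [CompleteSpace F]
    {k : ℕ} (hk : 2 ≤ k) {φ : V → ℝ} (hφ : ContDiff ℝ k φ) {η : V → F} (hη : ContDiff ℝ 1 η)
    (hη_supp : HasCompactSupport η) {s : Set V} (hs : Convex ℝ s) (hηs : tsupport η ⊆ s) {v : V}
    {α : ℝ} (hα : 0 < α) (hαφ : ∀ y ∈ s, α ≤ |iteratedFDeriv ℝ k φ y fun _ ↦ v|) :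
    ‖∫ y, Complex.exp (Complex.I * φ y) • η y ∂μ‖ ≤
      (2 ^ (k + 1) - 2) / α ^ ((1 : ℝ) / k) * ∫ y, ‖fderiv ℝ η y v‖ ∂μ := by
  rcases (tsupport η).eq_empty_or_nonempty with hempty | ⟨y₀, hy₀⟩
  · simp [tsupport_eq_empty_iff.1 hempty]
  have hv : v ≠ 0 := by
    rintro rfl
    have hzero : iteratedFDeriv ℝ k φ y₀ (fun _ ↦ 0) = 0 :=
      ContinuousMultilinearMap.map_coord_zero _ ⟨0, by lia⟩ rfl
    exact hα.not_ge (by simpa [hzero] using hαφ y₀ (hηs hy₀))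
  have hφ_cont : Continuous φ := hφ.continuous
  have hη_cont : Continuous η := hη.continuous
  have hη' : Continuous fun y ↦ ‖fderiv ℝ η y v‖ :=
    ((hη.continuous_fderiv one_ne_zero).clm_apply continuous_const).norm
  have hη'_supp : HasCompactSupport fun y ↦ ‖fderiv ℝ η y v‖ :=
    (hη_supp.fderiv_apply ℝ v).norm
  rw [← integral_const_mul]
  refine norm_integral_le_of_forall_line hv
    (Continuous.integrable_of_hasCompactSupport (by fun_prop) hη_supp.smul_left)
    ((hη'.integrable_of_hasCompactSupport hη'_supp).const_mul _) fun w ↦ ?_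
  rw [integral_const_mul]
  exact norm_integral_exp_smul_line_le hk hφ hη hη_supp hs hηs hv hα hαφ w

/-- Multidimensional corollary of the van der Corput lemma: if the `k`-th pure
partial derivative of the phase `φ` in the `j`-th direction is bounded below by
`α > 0` on an open ball `B` containing the support of the `C¹` amplitude `η`,
then `|∫ e^{iφ} η| ≤ (c_k/α^{1/k}) ∫ |∂η/∂y_j|`, with `c_k = 5·2^{k−1} − 2`. -/
theorem van_der_corput_multidim (d k : ℕ) (hk : 2 ≤ k)
    (φ : (Fin d → ℝ) → ℝ) (hφ : ContDiff ℝ (k : ℕ∞) φ)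
    (c : Fin d → ℝ) (r : ℝ) (hr : 0 < r)
    (η : (Fin d → ℝ) → ℂ) (hη : ContDiff ℝ 1 η) (hcpt : HasCompactSupport η)
    (hsupp : tsupport η ⊆ Metric.ball c r)
    (j : Fin d) (α : ℝ) (hα : 0 < α)
    (hlow : ∀ y ∈ Metric.ball c r,
      α ≤ |iteratedFDeriv ℝ k φ y (fun _ => Pi.single j 1)|) :
    ‖∫ y : Fin d → ℝ, Complex.exp (Complex.I * ((φ y : ℝ) : ℂ)) * η y‖ ≤
      ((5 * 2 ^ (k - 1) - 2 : ℝ) / α ^ ((1 : ℝ) / k)) *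
        ∫ y : Fin d → ℝ, ‖fderiv ℝ η y (Pi.single j 1)‖ := by
  have hk_pow : (2 : ℝ) ^ (k + 1) = 4 * 2 ^ (k - 1) := by
    rw [show k + 1 = k - 1 + 2 by lia, pow_add]
    ring
  refine (van_der_corput_multidim_general hk (mod_cast hφ) hη hcpt (convex_ball c r) hsupp hα
    hlow).trans ?_
  gcongr
  linarith [pow_pos (two_pos (α := ℝ)) (k - 1)]
end

section
/- (Uniform dispersive estimate, d ≥ 2) Let d ≥ 2, ω > 0, λ_j > 0, γ(k) = sqrt(ω² + 4∑_j λ_j sin²(k_j/2)), and φ_{t,x}(k) = k·x − 2tγ(k) for t ∈ ℝ, x ∈ ℤ^d. For every η ∈ C¹(𝕋^d) there is a constant C, independent of t and x, such that |∫_{𝕋^d} e^{iφ_{t,x}(k)} η(k) dk| ≤ C |t|^{−1/2} ( ‖∇η‖_{L¹} + ‖η‖_{L¹} ) for all |t| ≥ 1. -/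
open MeasureTheory Real

/-!
For a direction `v`, put `θ = ∂ᵥφ` and let `M` bound `|∂ᵥθ|` and `|∂ᵥ²θ|`. Integrating
`exp (iφ) = (M exp (iφ) - i θ ∂ᵥ exp (iφ)) / (M + θ²)` by parts on the torus, where there are no
boundary terms, leaves integrals of `1 / (M + θ²)`. Against the weight `(∂ᵥθ)²` they are controlled
by a second integration by parts, since `∂ᵥθ / (M + θ²)` is `M ^ (-1/2)` times the derivative of
`arctan (θ / √M)`, which is bounded by `π / 2` however large `θ` is. So `x`, which enters `θ` only
through an additive constant, drops out, and `M ∼ |t|` gives the decay `|t| ^ (-1/2)` wherever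
`∂ᵥ²γ ≠ 0`.

For `λᵢ, λⱼ ≠ 0` one of the directions `eᵢ`, `eⱼ`, `eᵢ + eⱼ` qualifies at every point: if
`∂ᵥ²γ = 0` for all three, then `(∂ᵥγ)² = ∑ₗ vₗ² λₗ cos kₗ` for all three, so `∂ᵢγ ∂ⱼγ = 0`, and
`∂ᵢγ = 0` would mean `cos kᵢ = 0 = sin kᵢ`.
-/

section DirectionalDerivative

variable {V E : Type*} [NormedAddCommGroup V] [NormedSpace ℝ V]
  [NormedAddCommGroup E] [NormedSpace ℝ E] {v : V} {m n : WithTop ℕ∞}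

/-- The directional derivative `∂ᵥF`, as an operator on functions so that it can be iterated;
it takes the junk value `0` where `F` is not differentiable. -/
noncomputable def dirDeriv (v : V) (F : V → E) (k : V) : E := fderiv ℝ F k v

lemma contDiff_dirDeriv {F : V → E} (hF : ContDiff ℝ n F) (hmn : m + 1 ≤ n) (v : V) :
    ContDiff ℝ m (dirDeriv v F) :=
  (hF.fderiv_right hmn).clm_apply contDiff_const

lemma continuous_dirDeriv {F : V → E} (hF : ContDiff ℝ 1 F) (v : V) :
    Continuous (dirDeriv v F) :=
  (contDiff_dirDeriv hF (m := 0) le_rfl v).continuous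

lemma dirDeriv_comp {f : ℝ → E} {f' : E} {F : V → ℝ} {k : V} (hf : HasDerivAt f f' (F k))
    (hF : DifferentiableAt ℝ F k) :
    dirDeriv v (fun y => f (F y)) k = dirDeriv v F k • f' := by
  have h := (hf.hasFDerivAt.comp k hF.hasFDerivAt).fderiv
  simpa [dirDeriv, Function.comp_def] using congrArg (· v) h

lemma dirDeriv_smul {A : Type*} [NormedRing A] [NormedAlgebra ℝ A] [Module A E]
    [IsBoundedSMul A E] [IsScalarTower ℝ A E] {f : V → A} {g : V → E} {k : V}
    (hf : DifferentiableAt ℝ f k) (hg : DifferentiableAt ℝ g k) :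
    dirDeriv v (fun y => f y • g y) k = f k • dirDeriv v g k + dirDeriv v f k • g k := by
  simp [dirDeriv, fderiv_fun_smul hf hg]

lemma dirDeriv_const_add_const_mul {F : V → ℝ} {k : V} (hF : DifferentiableAt ℝ F k) (b c : ℝ) :
    dirDeriv v (fun y => b + c * F y) k = c * dirDeriv v F k := by
  simp [dirDeriv, fderiv_const_add, fderiv_const_mul hF]

section Coordinates

variable {ι : Type*} [Fintype ι]

lemma dirDeriv_eq_sum [DecidableEq ι] (v : ι → ℝ) (F : (ι → ℝ) → E) (k : ι → ℝ) :
    dirDeriv v F k = ∑ j, v j • dirDeriv (Pi.single j 1) F k := by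
  conv_lhs => rw [dirDeriv, pi_eq_sum_univ' v]
  simp [dirDeriv, map_sum]

lemma norm_dirDeriv_le_norm_mul_sum [DecidableEq ι] (v : ι → ℝ) (F : (ι → ℝ) → E) (k : ι → ℝ) :
    ‖dirDeriv v F k‖ ≤ ‖v‖ * ∑ j, ‖dirDeriv (Pi.single j 1) F k‖ := by
  rw [dirDeriv_eq_sum, Finset.mul_sum]
  refine norm_sum_le_of_le _ fun j _ => ?_
  rw [norm_smul]
  gcongr
  exact norm_le_pi_norm v j

lemma dirDeriv_sum_comp_apply {v k : ι → ℝ} {f : ι → ℝ → E} {f' : ι → E}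
    (hf : ∀ j, HasDerivAt (f j) (f' j) (k j)) :
    dirDeriv v (fun y => ∑ j, f j (y j)) k = ∑ j, v j • f' j := by
  have h := (HasFDerivAt.fun_sum (u := Finset.univ) fun j _ => HasFDerivAt.comp k
    (f := fun y : ι → ℝ => y j) (hf j).hasFDerivAt (hasFDerivAt_apply j k)).fderiv
  simpa [dirDeriv, Function.comp_def] using congrArg (· v) h

end Coordinates

end DirectionalDerivative

section Torus

variable {d : ℕ} {α E : Type*} {v : Fin d → ℝ}

/-- Functions on the torus `𝕋^d`, encoded as functions on `ℝ^d` that are `2π`-periodic in each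
coordinate. -/
def TorusPeriodic (F : (Fin d → ℝ) → α) : Prop :=
  ∀ (k : Fin d → ℝ) (j : Fin d), F (k + Pi.single j (2 * π)) = F k

/-- The fundamental domain `(-π, π]^d` over which functions on `𝕋^d` are integrated. -/
def torusCell (d : ℕ) : Set (Fin d → ℝ) := Set.univ.pi fun _ => Set.Ioc (-π) π

lemma torusCell_ae_eq_Icc :
    torusCell d =ᵐ[volume] Set.Icc (fun _ => -π : Fin d → ℝ) (fun _ => π) :=
  Measure.univ_pi_Ioc_ae_eq_Icc

lemma torusCell_subset_Icc : torusCell d ⊆ Set.Icc (fun _ => -π) (fun _ => π) := fun _ hk =>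
  ⟨fun j => (hk j trivial).1.le, fun j => (hk j trivial).2⟩

lemma measurableSet_torusCell : MeasurableSet (torusCell d) :=
  MeasurableSet.univ_pi fun _ => measurableSet_Ioc

variable [NormedAddCommGroup E]

lemma integrableOn_torusCell {F : (Fin d → ℝ) → E} (hF : Continuous F) :
    IntegrableOn F (torusCell d) :=
  (hF.continuousOn.integrableOn_compact isCompact_Icc).mono_set torusCell_subset_Icc

lemma exists_pos_bound_on_torusCell {F : (Fin d → ℝ) → E} (hF : Continuous F) :
    ∃ C, 0 < C ∧ ∀ k ∈ torusCell d, ‖F k‖ ≤ C := by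
  obtain ⟨C, hC⟩ := isCompact_Icc.exists_bound_of_continuousOn hF.continuousOn
  exact ⟨max C 1, by positivity,
    fun k hk => (hC k (torusCell_subset_Icc hk)).trans (le_max_left _ _)⟩

lemma setIntegral_torusCell_mono {f g : (Fin d → ℝ) → ℝ} (hf : Continuous f) (hg : Continuous g)
    (h : ∀ k ∈ torusCell d, f k ≤ g k) : ∫ k in torusCell d, f k ≤ ∫ k in torusCell d, g k :=
  setIntegral_mono_on (integrableOn_torusCell hf) (integrableOn_torusCell hg)
    measurableSet_torusCell h

variable [NormedSpace ℝ E]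

lemma TorusPeriodic.dirDeriv {F : (Fin d → ℝ) → E} (hF : TorusPeriodic F) (v : Fin d → ℝ) :
    TorusPeriodic (dirDeriv v F) := fun k j => by
  have hshift : (fun y => F (y + Pi.single j (2 * π))) = F := funext fun y => hF y j
  have h := fderiv_comp_add_right (𝕜 := ℝ) (f := F) (x := k) (Pi.single j (2 * π))
  rw [hshift] at h
  rw [_root_.dirDeriv, ← h, _root_.dirDeriv]

lemma TorusPeriodic.insertNth_neg_pi {n : ℕ} {F : (Fin (n + 1) → ℝ) → α} (hF : TorusPeriodic F)
    (i : Fin (n + 1)) (y : Fin n → ℝ) : F (i.insertNth (-π) y) = F (i.insertNth π y) := by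
  rw [← hF (i.insertNth (-π) y) i]
  congr 1
  ext j
  refine Fin.succAboveCases i ?_ (fun j => ?_) j
  · simp only [Pi.add_apply, Fin.insertNth_apply_same, Pi.single_eq_same]
    ring
  · simp [Fin.succAbove_ne]

lemma integral_dirDeriv_eq_zero [CompleteSpace E] {F : (Fin d → ℝ) → E} (hF : ContDiff ℝ 1 F)
    (hFp : TorusPeriodic F) : ∫ k in torusCell d, dirDeriv v F k = 0 := by
  rw [setIntegral_congr_set torusCell_ae_eq_Icc]
  rcases d with _ | n
  · simp only [dirDeriv, Subsingleton.elim v 0, map_zero, integral_zero]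
  have hdiv : ∀ k, dirDeriv v F k = ∑ i, (v i • fderiv ℝ F k) (Pi.single i 1) :=
    fun k => dirDeriv_eq_sum v F k
  have hfaces := integral_divergence_of_hasFDerivAt_off_countable' (fun _ => -π) (fun _ => π)
    (fun _ => by linarith [pi_pos]) (fun i k => v i • F k) (fun i k => v i • fderiv ℝ F k) ∅
    Set.countable_empty (fun i => (continuous_const.smul hF.continuous).continuousOn)
    (fun x _ i => (hF.differentiable one_ne_zero x).hasFDerivAt.const_smul (v i))
    (by simpa only [← hdiv] using
      (continuous_dirDeriv hF v).continuousOn.integrableOn_compact isCompact_Icc)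
  simp only [← hdiv] at hfaces
  simp only [hfaces, hFp.insertNth_neg_pi, sub_self, Finset.sum_const_zero]

lemma integral_smul_dirDeriv_eq_neg {A : Type*} [NormedRing A] [NormedAlgebra ℝ A] [Module A E]
    [IsBoundedSMul A E] [IsScalarTower ℝ A E] [CompleteSpace E] {f : (Fin d → ℝ) → A}
    {g : (Fin d → ℝ) → E} (hf : ContDiff ℝ 1 f) (hfp : TorusPeriodic f) (hg : ContDiff ℝ 1 g)
    (hgp : TorusPeriodic g) :
    ∫ k in torusCell d, f k • dirDeriv v g k = -∫ k in torusCell d, dirDeriv v f k • g k := by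
  have hfgp : TorusPeriodic fun k => f k • g k := fun k j => by simp only [hfp k j, hgp k j]
  have hzero : ∫ k in torusCell d, dirDeriv v (fun y => f y • g y) k = 0 :=
    integral_dirDeriv_eq_zero (hf.smul hg) hfgp
  simp only [dirDeriv_smul (hf.differentiable one_ne_zero _) (hg.differentiable one_ne_zero _)]
    at hzero
  have hfDg : Continuous fun k => f k • dirDeriv v g k :=
    hf.continuous.smul (continuous_dirDeriv hg v)
  have hDfg : Continuous fun k => dirDeriv v f k • g k :=
    (continuous_dirDeriv hf v).smul hg.continuous
  rw [integral_add (integrableOn_torusCell hfDg) (integrableOn_torusCell hDfg)] at hzero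
  exact eq_neg_of_add_eq_zero_left hzero

end Torus

section VanDerCorput

variable {d : ℕ} {v : Fin d → ℝ} {S : ℝ}

lemma abs_div_add_sq_le (hS : 0 < S) (x : ℝ) : |x / (S + x ^ 2)| ≤ 1 / (2 * √S) := by
  have hpos : 0 < S + x ^ 2 := by positivity
  have hamgm := two_mul_le_add_sq (√S) |x|
  rw [sq_sqrt hS.le, sq_abs] at hamgm
  rw [abs_div, abs_of_pos hpos, div_le_div_iff₀ hpos (by positivity)]
  linarith

lemma hasDerivAt_div_add_sq (hS : 0 < S) (x : ℝ) :
    HasDerivAt (fun y => y / (S + y ^ 2)) ((S - x ^ 2) / (S + x ^ 2) ^ 2) x := by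
  have hne : S + x ^ 2 ≠ 0 := by positivity
  refine ((hasDerivAt_id' x).fun_div ((hasDerivAt_pow 2 x).const_add S) hne).congr_deriv ?_
  congr 1
  ring

lemma abs_deriv_div_add_sq_le (hS : 0 < S) (x : ℝ) :
    |(S - x ^ 2) / (S + x ^ 2) ^ 2| ≤ 1 / (S + x ^ 2) := by
  have hpos : 0 < S + x ^ 2 := by positivity
  have hnum : |S - x ^ 2| ≤ S + x ^ 2 := by
    rw [abs_le]
    constructor <;> linarith [sq_nonneg x]
  rw [abs_div, abs_of_pos (pow_pos hpos 2), div_le_div_iff₀ (pow_pos hpos 2) hpos]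
  nlinarith

lemma hasDerivAt_arctan_div_sqrt (hS : 0 < S) (x : ℝ) :
    HasDerivAt (fun y => arctan (y / √S)) (√S / (S + x ^ 2)) x := by
  convert ((hasDerivAt_id' x).div_const (√S)).arctan using 1
  rw [div_pow, sq_sqrt hS.le]
  field_simp
  rw [sq_sqrt hS.le]

/-- Integrating by parts against `arctan (θ / √S)`, which is bounded uniformly in `θ`. -/
lemma integral_mul_dirDeriv_div_add_sq_le {θ h : (Fin d → ℝ) → ℝ} (hθ : ContDiff ℝ 1 θ)
    (hθp : TorusPeriodic θ) (hh : ContDiff ℝ 1 h) (hhp : TorusPeriodic h) (hS : 0 < S) :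
    ∫ k in torusCell d, h k * (dirDeriv v θ k / (S + θ k ^ 2)) ≤
      π / (2 * √S) * ∫ k in torusCell d, |dirDeriv v h k| := by
  set a : (Fin d → ℝ) → ℝ := fun k => arctan (θ k / √S) with ha
  have hac : ContDiff ℝ 1 a := (hθ.div_const _).arctan
  have hap : TorusPeriodic a := fun k j => by simp only [ha, hθp k j]
  have hDa : ∀ k, dirDeriv v a k = √S * (dirDeriv v θ k / (S + θ k ^ 2)) := fun k => by
    rw [ha, dirDeriv_comp (hasDerivAt_arctan_div_sqrt hS (θ k)) (hθ.differentiable one_ne_zero k),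
      smul_eq_mul]
    ring
  have hparts := integral_smul_dirDeriv_eq_neg (v := v) hh hhp hac hap
  simp only [smul_eq_mul, hDa, mul_left_comm _ (√S), integral_const_mul] at hparts
  have hDhc := continuous_dirDeriv hh v
  have hbound : -∫ k in torusCell d, dirDeriv v h k * a k ≤
      π / 2 * ∫ k in torusCell d, |dirDeriv v h k| := by
    rw [← integral_neg, ← integral_const_mul]
    refine setIntegral_torusCell_mono (hDhc.mul hac.continuous).neg (hDhc.abs.const_mul _)
      fun k _ => ?_
    have hak : |a k| ≤ π / 2 :=
      abs_le.2 ⟨(neg_pi_div_two_lt_arctan _).le, (arctan_lt_pi_div_two _).le⟩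
    calc -(dirDeriv v h k * a k) ≤ |dirDeriv v h k| * |a k| := by
          rw [← abs_mul]
          exact neg_le_abs _
      _ ≤ π / 2 * |dirDeriv v h k| := by
          rw [mul_comm]
          gcongr
  calc _ = (√S * ∫ k in torusCell d, h k * (dirDeriv v θ k / (S + θ k ^ 2))) / √S := by
        field_simp
    _ ≤ (π / 2 * ∫ k in torusCell d, |dirDeriv v h k|) / √S :=
        div_le_div_of_nonneg_right (hparts.trans_le hbound) (sqrt_nonneg S)
    _ = _ := by field_simp

section RegularizedNorm

variable {V F : Type*} [NormedAddCommGroup V] [NormedSpace ℝ V] [NormedAddCommGroup F] {ε : ℝ}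

/-- The smooth majorant `√(ε² + ‖x‖²)` of the norm. -/
noncomputable def regNorm (ε : ℝ) (x : F) : ℝ := √(ε ^ 2 + ‖x‖ ^ 2)

lemma norm_le_regNorm (ε : ℝ) (x : F) : ‖x‖ ≤ regNorm ε x :=
  le_sqrt_of_sq_le (by linarith [sq_nonneg ε])

lemma regNorm_le_norm_add (hε : 0 < ε) (x : F) : regNorm ε x ≤ ‖x‖ + ε := by
  rw [regNorm, sqrt_le_left (by positivity)]
  nlinarith [norm_nonneg x]

variable [InnerProductSpace ℝ F]

lemma contDiff_regNorm {n : WithTop ℕ∞} {ψ : V → F} (hψ : ContDiff ℝ n ψ) (hε : 0 < ε) :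
    ContDiff ℝ n fun k => regNorm ε (ψ k) :=
  (contDiff_const.add (hψ.norm_sq ℝ)).sqrt fun _ => by positivity

lemma differentiableAt_regNorm {ψ : V → F} {k : V} (hψ : DifferentiableAt ℝ ψ k) (hε : 0 < ε) :
    DifferentiableAt ℝ (fun y => regNorm ε (ψ y)) k :=
  ((hψ.norm_sq ℝ).const_add _).sqrt (by positivity)

lemma abs_dirDeriv_regNorm_le {v : V} {ψ : V → F} {k : V}
    (hψ : DifferentiableAt ℝ ψ k) (hε : 0 < ε) :
    |dirDeriv v (fun y => regNorm ε (ψ y)) k| ≤ ‖dirDeriv v ψ k‖ := by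
  have hpos : 0 < ε ^ 2 + ‖ψ k‖ ^ 2 := by positivity
  have hderiv : dirDeriv v (fun y => regNorm ε (ψ y)) k =
      inner ℝ (ψ k) (dirDeriv v ψ k) / regNorm ε (ψ k) := by
    have h := ((hψ.hasFDerivAt.norm_sq.const_add (ε ^ 2)).sqrt hpos.ne').fderiv
    simp only [dirDeriv, regNorm, h, one_div, mul_inv_rev, smul_apply,
      ContinuousLinearMap.comp_apply, coe_innerSL_apply, nsmul_eq_mul, Nat.cast_ofNat, smul_eq_mul]
    field_simp
  have hreg : 0 < regNorm ε (ψ k) := sqrt_pos.2 hpos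
  rw [hderiv, abs_div, abs_of_pos hreg, div_le_iff₀ hreg, mul_comm]
  exact (abs_real_inner_le_norm _ _).trans (by gcongr; exact norm_le_regNorm _ _)

lemma abs_dirDeriv_mul_regNorm_le {v : V} {a : V → ℝ} {ψ : V → F} {k : V}
    (ha : DifferentiableAt ℝ a k) (hψ : DifferentiableAt ℝ ψ k) (hε : 0 < ε) :
    |dirDeriv v (fun y => a y * regNorm ε (ψ y)) k| ≤
      |dirDeriv v a k| * ‖ψ k‖ + |a k| * ‖dirDeriv v ψ k‖ + ε * |dirDeriv v a k| := by
  have hprod := dirDeriv_smul (v := v) ha (differentiableAt_regNorm hψ hε)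
  simp only [smul_eq_mul] at hprod
  have hreg : |regNorm ε (ψ k)| ≤ ‖ψ k‖ + ε :=
    (abs_of_nonneg (sqrt_nonneg _)).trans_le (regNorm_le_norm_add hε _)
  calc _ ≤ |a k| * |dirDeriv v (fun y => regNorm ε (ψ y)) k| +
        |dirDeriv v a k| * |regNorm ε (ψ k)| := by
        rw [hprod, ← abs_mul, ← abs_mul]
        exact abs_add_le _ _
    _ ≤ |a k| * ‖dirDeriv v ψ k‖ + |dirDeriv v a k| * (‖ψ k‖ + ε) := by
        gcongr
        exact abs_dirDeriv_regNorm_le hψ hε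
    _ = _ := by ring

section

variable {θ : (Fin d → ℝ) → ℝ} {ψ : (Fin d → ℝ) → F}

lemma integral_norm_mul_sq_dirDeriv_div_add_sq_le_add (hθ : ContDiff ℝ 2 θ)
    (hθp : TorusPeriodic θ) (hψ : ContDiff ℝ 1 ψ) (hψp : TorusPeriodic ψ) (hS : 0 < S)
    (hε : 0 < ε) :
    ∫ k in torusCell d, ‖ψ k‖ * (dirDeriv v θ k ^ 2 / (S + θ k ^ 2)) ≤
      π / (2 * √S) * ((∫ k in torusCell d,
        (|dirDeriv v (dirDeriv v θ) k| * ‖ψ k‖ + |dirDeriv v θ k| * ‖dirDeriv v ψ k‖)) +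
        ε * ∫ k in torusCell d, |dirDeriv v (dirDeriv v θ) k|) := by
  set a := dirDeriv v θ
  have ha : ContDiff ℝ 1 a := contDiff_dirDeriv hθ (by norm_num) v
  have hap : TorusPeriodic fun k => a k * regNorm ε (ψ k) := fun k j => by
    simp only [a, hθp.dirDeriv v k j, hψp k j]
  have hreg : ContDiff ℝ 1 fun k => regNorm ε (ψ k) := contDiff_regNorm hψ hε
  have hpos : ∀ k, S + θ k ^ 2 ≠ 0 := fun k => by positivity
  have hDac := continuous_dirDeriv ha v
  have hDψc := continuous_dirDeriv hψ v
  have hac := ha.continuous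
  have hψc := hψ.continuous
  have hθc := hθ.continuous
  have hregc := hreg.continuous
  calc ∫ k in torusCell d, ‖ψ k‖ * (a k ^ 2 / (S + θ k ^ 2))
      ≤ ∫ k in torusCell d, a k * regNorm ε (ψ k) * (a k / (S + θ k ^ 2)) := by
        refine setIntegral_torusCell_mono (by fun_prop (disch := exact hpos))
          (by fun_prop (disch := exact hpos)) fun k _ => ?_
        calc _ ≤ regNorm ε (ψ k) * (a k ^ 2 / (S + θ k ^ 2)) := by
              gcongr
              exact norm_le_regNorm _ _
          _ = _ := by ring
    _ ≤ π / (2 * √S) * ∫ k in torusCell d, |dirDeriv v (fun y => a y * regNorm ε (ψ y)) k| :=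
        integral_mul_dirDeriv_div_add_sq_le (hθ.of_le one_le_two) hθp (ha.mul hreg) hap hS
    _ ≤ π / (2 * √S) * ∫ k in torusCell d,
          (|dirDeriv v a k| * ‖ψ k‖ + |a k| * ‖dirDeriv v ψ k‖ + ε * |dirDeriv v a k|) := by
        gcongr ?_ * ?_
        exact setIntegral_torusCell_mono (continuous_dirDeriv (ha.mul hreg) v).abs
          (by fun_prop) fun k _ => abs_dirDeriv_mul_regNorm_le
            (ha.differentiable one_ne_zero k) (hψ.differentiable one_ne_zero k) hε
    _ = _ := by
        rw [integral_add (integrableOn_torusCell (by fun_prop))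
          (integrableOn_torusCell (by fun_prop)), integral_const_mul]

lemma integral_norm_mul_sq_dirDeriv_div_add_sq_le (hθ : ContDiff ℝ 2 θ)
    (hθp : TorusPeriodic θ) (hψ : ContDiff ℝ 1 ψ) (hψp : TorusPeriodic ψ) (hS : 0 < S) :
    ∫ k in torusCell d, ‖ψ k‖ * (dirDeriv v θ k ^ 2 / (S + θ k ^ 2)) ≤
      π / (2 * √S) * ∫ k in torusCell d,
        (|dirDeriv v (dirDeriv v θ) k| * ‖ψ k‖ + |dirDeriv v θ k| * ‖dirDeriv v ψ k‖) := by
  set R := ∫ k in torusCell d,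
    (|dirDeriv v (dirDeriv v θ) k| * ‖ψ k‖ + |dirDeriv v θ k| * ‖dirDeriv v ψ k‖)
  set c := ∫ k in torusCell d, |dirDeriv v (dirDeriv v θ) k|
  have hlim : Filter.Tendsto (fun ε => π / (2 * √S) * (R + ε * c)) (nhdsWithin 0 (Set.Ioi 0))
      (nhds (π / (2 * √S) * R)) :=
    (Continuous.tendsto' (by fun_prop) _ _ (by simp)).mono_left nhdsWithin_le_nhds
  exact ge_of_tendsto hlim (Filter.eventually_of_mem self_mem_nhdsWithin fun _ hε =>
    integral_norm_mul_sq_dirDeriv_div_add_sq_le_add hθ hθp hψ hψp hS hε)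

lemma integral_norm_mul_sq_dirDeriv_div_add_sq_le_of_abs_le {M : ℝ} (hM : 0 < M)
    (hθ : ContDiff ℝ 2 θ) (hθp : TorusPeriodic θ) (hψ : ContDiff ℝ 1 ψ) (hψp : TorusPeriodic ψ)
    (hθ₁ : ∀ k ∈ torusCell d, |dirDeriv v θ k| ≤ M)
    (hθ₂ : ∀ k ∈ torusCell d, |dirDeriv v (dirDeriv v θ) k| ≤ M) :
    ∫ k in torusCell d, ‖ψ k‖ * (dirDeriv v θ k ^ 2 / (M + θ k ^ 2)) ≤
      π * √M / 2 * ∫ k in torusCell d, (‖ψ k‖ + ‖dirDeriv v ψ k‖) := by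
  have hDθ : ContDiff ℝ 1 (dirDeriv v θ) := contDiff_dirDeriv hθ (by norm_num) v
  have hDθc := hDθ.continuous
  have hDDθc := continuous_dirDeriv hDθ v
  have hψc := hψ.continuous
  have hDψc := continuous_dirDeriv hψ v
  calc _ ≤ π / (2 * √M) * ∫ k in torusCell d,
          (|dirDeriv v (dirDeriv v θ) k| * ‖ψ k‖ + |dirDeriv v θ k| * ‖dirDeriv v ψ k‖) :=
        integral_norm_mul_sq_dirDeriv_div_add_sq_le hθ hθp hψ hψp hM
    _ ≤ π / (2 * √M) * ∫ k in torusCell d, M * (‖ψ k‖ + ‖dirDeriv v ψ k‖) := by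
        gcongr ?_ * ?_
        refine setIntegral_torusCell_mono (by fun_prop) (by fun_prop) fun k hk => ?_
        rw [mul_add]
        gcongr
        exacts [hθ₂ k hk, hθ₁ k hk]
    _ = _ := by
        rw [integral_const_mul, ← mul_assoc]
        congr 1
        field_simp
        rw [sq_sqrt hM.le]

end

end RegularizedNorm

section ExponentialIntegral

variable {φ : (Fin d → ℝ) → ℝ} {g ψ : (Fin d → ℝ) → ℂ}

lemma contDiff_exp_I_mul {V : Type*} [NormedAddCommGroup V] [NormedSpace ℝ V] {φ : V → ℝ}
    {n : WithTop ℕ∞} (hφ : ContDiff ℝ n φ) :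
    ContDiff ℝ n fun k => Complex.exp (Complex.I * φ k) :=
  (contDiff_const.mul (Complex.ofRealCLM.contDiff.comp hφ)).cexp

lemma dirDeriv_exp_I_mul {V : Type*} [NormedAddCommGroup V] [NormedSpace ℝ V] {φ : V → ℝ} {v k : V}
    (hφ : DifferentiableAt ℝ φ k) :
    dirDeriv v (fun y => Complex.exp (Complex.I * φ y)) k =
      dirDeriv v φ k * (Complex.I * Complex.exp (Complex.I * φ k)) := by
  have hexp : HasDerivAt (fun s : ℝ => Complex.exp (Complex.I * s))
      (Complex.I * Complex.exp (Complex.I * φ k)) (φ k) := by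
    simpa [mul_comm] using ((hasDerivAt_id (φ k)).ofReal_comp.const_mul Complex.I).cexp
  rw [dirDeriv_comp hexp hφ, Complex.real_smul]

lemma TorusPeriodic.dirDeriv_of_exp_I_mul (hφ : ContDiff ℝ 1 φ)
    (hper : TorusPeriodic fun k => Complex.exp (Complex.I * φ k)) (v : Fin d → ℝ) :
    TorusPeriodic (_root_.dirDeriv v φ) := fun k j => by
  have hdiff := hφ.differentiable one_ne_zero
  have hexp : Complex.exp (Complex.I * φ (k + Pi.single j (2 * π))) =
      Complex.exp (Complex.I * φ k) := hper k j
  have h := hper.dirDeriv v k j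
  rw [dirDeriv_exp_I_mul (hdiff _), dirDeriv_exp_I_mul (hdiff _), hexp] at h
  exact_mod_cast mul_right_cancel₀ (mul_ne_zero Complex.I_ne_zero (Complex.exp_ne_zero _)) h

lemma exp_I_mul_mul_eq_add {V : Type*} [NormedAddCommGroup V] [NormedSpace ℝ V] {φ : V → ℝ}
    {v k : V} (hφ : DifferentiableAt ℝ φ k) (hS : 0 < S) (z : ℂ) :
    Complex.exp (Complex.I * φ k) * z =
      Complex.exp (Complex.I * φ k) * ((S / (S + dirDeriv v φ k ^ 2)) • z) +
        -Complex.I * (dirDeriv v (fun y => Complex.exp (Complex.I * φ y)) k *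
          ((dirDeriv v φ k / (S + dirDeriv v φ k ^ 2)) • z)) := by
  have hpos : (S + dirDeriv v φ k ^ 2 : ℂ) ≠ 0 := by
    exact_mod_cast (by positivity : S + dirDeriv v φ k ^ 2 ≠ 0)
  rw [dirDeriv_exp_I_mul hφ]
  simp only [Complex.real_smul]
  push_cast
  field_simp
  linear_combination z * ((dirDeriv v φ k : ℝ) : ℂ) ^ 2 * Complex.I_sq

lemma integral_exp_mul_eq (hφ : ContDiff ℝ 2 φ)
    (hper : TorusPeriodic fun k => Complex.exp (Complex.I * φ k)) (hg : ContDiff ℝ 1 g)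
    (hgp : TorusPeriodic g) (hS : 0 < S) :
    ∫ k in torusCell d, Complex.exp (Complex.I * φ k) * g k =
      ∫ k in torusCell d, Complex.exp (Complex.I * φ k) *
        ((S / (S + dirDeriv v φ k ^ 2)) • g k + Complex.I *
          dirDeriv v (fun y => (dirDeriv v φ y / (S + dirDeriv v φ y ^ 2)) • g y) k) := by
  have hφ1 : ContDiff ℝ 1 φ := hφ.of_le one_le_two
  set e : (Fin d → ℝ) → ℂ := fun k => Complex.exp (Complex.I * φ k)
  set θ := dirDeriv v φ
  have hpos : ∀ k, S + θ k ^ 2 ≠ 0 := fun k => by positivity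
  have he : ContDiff ℝ 1 e := contDiff_exp_I_mul hφ1
  have hθ : ContDiff ℝ 1 θ := contDiff_dirDeriv hφ (by norm_num) v
  have hθp : TorusPeriodic θ := .dirDeriv_of_exp_I_mul hφ1 hper v
  set G : (Fin d → ℝ) → ℂ := fun k => (θ k / (S + θ k ^ 2)) • g k with hG_def
  have hG : ContDiff ℝ 1 G := (hθ.div (contDiff_const.add (hθ.pow 2)) hpos).smul hg
  have hGp : TorusPeriodic G := fun k j => by simp only [hG_def, hθp k j, hgp k j]
  have hparts := integral_smul_dirDeriv_eq_neg (v := v) he hper hG hGp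
  have hec := he.continuous
  have hθc := hθ.continuous
  have hgc := hg.continuous
  have hDec := continuous_dirDeriv he v
  have hGc := hG.continuous
  have hDGc := continuous_dirDeriv hG v
  have hsplit : ∀ k, e k * g k = e k * ((S / (S + θ k ^ 2)) • g k) +
      -Complex.I * (dirDeriv v e k * G k) := fun k =>
    exp_I_mul_mul_eq_add (hφ1.differentiable one_ne_zero k) hS (g k)
  have hfirst : IntegrableOn (fun k => e k * ((S / (S + θ k ^ 2)) • g k)) (torusCell d) :=
    integrableOn_torusCell (by fun_prop (disch := exact hpos))
  calc ∫ k in torusCell d, e k * g k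
      = (∫ k in torusCell d, e k * ((S / (S + θ k ^ 2)) • g k)) +
          -Complex.I * ∫ k in torusCell d, dirDeriv v e k * G k := by
        simp only [hsplit]
        rw [integral_add hfirst (integrableOn_torusCell (by fun_prop)), integral_const_mul]
    _ = (∫ k in torusCell d, e k * ((S / (S + θ k ^ 2)) • g k)) +
          ∫ k in torusCell d, Complex.I * (e k * dirDeriv v G k) := by
        simp only [smul_eq_mul] at hparts
        rw [integral_const_mul, hparts]
        ring
    _ = _ := by
        rw [← integral_add hfirst (integrableOn_torusCell (by fun_prop))]
        congr with k
        ring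

lemma norm_dirDeriv_div_add_sq_smul_le {V F : Type*} [NormedAddCommGroup V] [NormedSpace ℝ V]
    [NormedAddCommGroup F] [NormedSpace ℝ F] {v k : V} {θ : V → ℝ} {g : V → F}
    (hθ : DifferentiableAt ℝ θ k) (hg : DifferentiableAt ℝ g k) (hS : 0 < S) :
    ‖dirDeriv v (fun y => (θ y / (S + θ y ^ 2)) • g y) k‖ ≤
      |dirDeriv v θ k| / (S + θ k ^ 2) * ‖g k‖ + ‖dirDeriv v g k‖ / (2 * √S) := by
  have hpos : S + θ k ^ 2 ≠ 0 := by positivity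
  have hq : DifferentiableAt ℝ (fun y => θ y / (S + θ y ^ 2)) k := by
    fun_prop (disch := exact hpos)
  rw [dirDeriv_smul hq hg, dirDeriv_comp (hasDerivAt_div_add_sq hS (θ k)) hθ]
  calc _ ≤ |θ k / (S + θ k ^ 2)| * ‖dirDeriv v g k‖ +
        |dirDeriv v θ k| * |(S - θ k ^ 2) / (S + θ k ^ 2) ^ 2| * ‖g k‖ := by
        refine (norm_add_le _ _).trans_eq ?_
        simp only [norm_smul, smul_eq_mul, norm_mul, norm_eq_abs]
    _ ≤ 1 / (2 * √S) * ‖dirDeriv v g k‖ + |dirDeriv v θ k| * (1 / (S + θ k ^ 2)) * ‖g k‖ := by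
        gcongr
        exacts [abs_div_add_sq_le hS _, abs_deriv_div_add_sq_le hS _]
    _ = _ := by ring

lemma norm_integral_exp_mul_le (hφ : ContDiff ℝ 2 φ)
    (hper : TorusPeriodic fun k => Complex.exp (Complex.I * φ k)) (hg : ContDiff ℝ 1 g)
    (hgp : TorusPeriodic g) (hS : 0 < S) :
    ‖∫ k in torusCell d, Complex.exp (Complex.I * φ k) * g k‖ ≤
      ∫ k in torusCell d, ((S + |dirDeriv v (dirDeriv v φ) k|) / (S + dirDeriv v φ k ^ 2) * ‖g k‖ +
        ‖dirDeriv v g k‖ / (2 * √S)) := by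
  rw [integral_exp_mul_eq (v := v) hφ hper hg hgp hS]
  set θ := dirDeriv v φ
  have hθ : ContDiff ℝ 1 θ := contDiff_dirDeriv hφ (by norm_num) v
  have hpos : ∀ k, S + θ k ^ 2 ≠ 0 := fun k => by positivity
  have hG : ContDiff ℝ 1 fun k => (θ k / (S + θ k ^ 2)) • g k :=
    (hθ.div (contDiff_const.add (hθ.pow 2)) hpos).smul hg
  have hφc := hφ.continuous
  have hθc := hθ.continuous
  have hgc := hg.continuous
  have hDθc := continuous_dirDeriv hθ v
  have hDgc := continuous_dirDeriv hg v
  have hDGc := continuous_dirDeriv hG v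
  refine (norm_integral_le_integral_norm _).trans (setIntegral_torusCell_mono
    (by fun_prop (disch := exact hpos)) (by fun_prop (disch := exact hpos)) fun k _ => ?_)
  have hDG := norm_dirDeriv_div_add_sq_smul_le (v := v) (hθ.differentiable one_ne_zero k)
    (hg.differentiable one_ne_zero k) hS
  calc _ ≤ ‖(S / (S + θ k ^ 2)) • g k‖ +
        ‖dirDeriv v (fun y => (θ y / (S + θ y ^ 2)) • g y) k‖ := by
        rw [norm_mul, Complex.norm_exp_I_mul_ofReal, one_mul]
        refine (norm_add_le _ _).trans_eq ?_
        rw [norm_mul, Complex.norm_I, one_mul]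
    _ ≤ S / (S + θ k ^ 2) * ‖g k‖ +
        (|dirDeriv v θ k| / (S + θ k ^ 2) * ‖g k‖ + ‖dirDeriv v g k‖ / (2 * √S)) := by
        rw [norm_smul, norm_eq_abs, abs_of_pos (by positivity)]
        gcongr
    _ = _ := by ring

lemma norm_dirDeriv_sq_smul_div_sqrt_le {V F : Type*} [NormedAddCommGroup V] [NormedSpace ℝ V]
    [NormedAddCommGroup F] [NormedSpace ℝ F] {v k : V} {a : V → ℝ} {ψ : V → F} {M : ℝ} (hM : 0 < M)
    (ha : DifferentiableAt ℝ a k) (hψ : DifferentiableAt ℝ ψ k) (hak : |a k| ≤ M)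
    (hDak : |dirDeriv v a k| ≤ M) :
    ‖dirDeriv v (fun y => a y ^ 2 • ψ y) k‖ / (2 * √M) ≤
      M * √M * (‖ψ k‖ + ‖dirDeriv v ψ k‖) := by
  rw [dirDeriv_smul (ha.fun_pow 2) hψ, dirDeriv_comp (hasDerivAt_pow 2 (a k)) ha,
    div_le_iff₀ (by positivity)]
  calc _ ≤ |a k| ^ 2 * ‖dirDeriv v ψ k‖ + |dirDeriv v a k| * (2 * |a k|) * ‖ψ k‖ := by
        refine (norm_add_le _ _).trans_eq ?_
        simp [norm_smul]
    _ ≤ M ^ 2 * ‖dirDeriv v ψ k‖ + M * (2 * M) * ‖ψ k‖ := by gcongr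
    _ ≤ 2 * M ^ 2 * (‖ψ k‖ + ‖dirDeriv v ψ k‖) := by
        nlinarith [mul_nonneg (sq_nonneg M) (norm_nonneg (dirDeriv v ψ k))]
    _ = 2 * M * √M ^ 2 * (‖ψ k‖ + ‖dirDeriv v ψ k‖) := by
        rw [sq_sqrt hM.le]
        ring
    _ = _ := by ring

/-- A van der Corput estimate: where `|∂ᵥ²φ|` is comparable to its bound `M`, the oscillatory
integral gains a factor `M ^ (-1/2)`. -/
lemma norm_integral_exp_mul_sq_smul_le {M : ℝ} (hM : 0 < M) (hφ : ContDiff ℝ 3 φ)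
    (hper : TorusPeriodic fun k => Complex.exp (Complex.I * φ k)) (hψ : ContDiff ℝ 1 ψ)
    (hψp : TorusPeriodic ψ) (hφ₂ : ∀ k ∈ torusCell d, |dirDeriv v (dirDeriv v φ) k| ≤ M)
    (hφ₃ : ∀ k ∈ torusCell d, |dirDeriv v (dirDeriv v (dirDeriv v φ)) k| ≤ M) :
    ‖∫ k in torusCell d,
        Complex.exp (Complex.I * φ k) * (dirDeriv v (dirDeriv v φ) k ^ 2 • ψ k)‖ ≤
      (π + 1) * (M * √M) * ∫ k in torusCell d, (‖ψ k‖ + ‖dirDeriv v ψ k‖) := by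
  set θ := dirDeriv v φ
  have hθ : ContDiff ℝ 2 θ := contDiff_dirDeriv hφ (by norm_num) v
  have hθp : TorusPeriodic θ := .dirDeriv_of_exp_I_mul (hφ.of_le (by norm_num)) hper v
  set a := dirDeriv v θ
  have ha : ContDiff ℝ 1 a := contDiff_dirDeriv hθ (by norm_num) v
  have hg : ContDiff ℝ 1 fun k => a k ^ 2 • ψ k := (ha.pow 2).smul hψ
  have hgp : TorusPeriodic fun k => a k ^ 2 • ψ k := fun k j => by
    simp only [a, hθp.dirDeriv v k j, hψp k j]
  have hpos : ∀ k, M + θ k ^ 2 ≠ 0 := fun k => by positivity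
  have hθc := hθ.continuous
  have hac := ha.continuous
  have hψc := hψ.continuous
  have hDψc := continuous_dirDeriv hψ v
  have hDgc := continuous_dirDeriv hg v
  calc _ ≤ ∫ k in torusCell d, ((M + |a k|) / (M + θ k ^ 2) * ‖a k ^ 2 • ψ k‖ +
          ‖dirDeriv v (fun y => a y ^ 2 • ψ y) k‖ / (2 * √M)) :=
        norm_integral_exp_mul_le (hφ.of_le (by norm_num)) hper hg hgp hM
    _ ≤ ∫ k in torusCell d, (2 * M * (‖ψ k‖ * (a k ^ 2 / (M + θ k ^ 2))) +
          M * √M * (‖ψ k‖ + ‖dirDeriv v ψ k‖)) := by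
        refine setIntegral_torusCell_mono (by fun_prop (disch := exact hpos))
          (by fun_prop (disch := exact hpos)) fun k hk => add_le_add ?_ ?_
        · rw [norm_smul, norm_pow, norm_eq_abs, sq_abs]
          calc _ ≤ (M + M) / (M + θ k ^ 2) * (a k ^ 2 * ‖ψ k‖) := by
                gcongr
                exact hφ₂ k hk
            _ = _ := by ring
        · exact norm_dirDeriv_sq_smul_div_sqrt_le hM (ha.differentiable one_ne_zero k)
            (hψ.differentiable one_ne_zero k) (hφ₂ k hk) (hφ₃ k hk)
    _ = 2 * M * (∫ k in torusCell d, ‖ψ k‖ * (a k ^ 2 / (M + θ k ^ 2))) +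
          M * √M * ∫ k in torusCell d, (‖ψ k‖ + ‖dirDeriv v ψ k‖) := by
        rw [integral_add (integrableOn_torusCell (by fun_prop (disch := exact hpos)))
          (integrableOn_torusCell (by fun_prop)), integral_const_mul, integral_const_mul]
    _ ≤ 2 * M * (π * √M / 2 * ∫ k in torusCell d, (‖ψ k‖ + ‖dirDeriv v ψ k‖)) +
          M * √M * ∫ k in torusCell d, (‖ψ k‖ + ‖dirDeriv v ψ k‖) := by
        gcongr
        exact integral_norm_mul_sq_dirDeriv_div_add_sq_le_of_abs_le hM hθ hθp hψ hψp hφ₂ hφ₃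
    _ = _ := by ring

end ExponentialIntegral

end VanDerCorput


section PlaneWave

variable {d : ℕ} {E : Type*} [NormedAddCommGroup E] [NormedSpace ℝ E] {γ w : (Fin d → ℝ) → ℝ}

/-- The phase `φ_{t,x}(k) = k·x - 2tγ(k)` of the group generated by the dispersion relation `γ`. -/
noncomputable def planeWavePhase (γ : (Fin d → ℝ) → ℝ) (t : ℝ) (x : Fin d → ℤ)
    (k : Fin d → ℝ) : ℝ :=
  (∑ j, k j * (x j : ℝ)) - 2 * t * γ k

lemma contDiff_planeWavePhase {n : WithTop ℕ∞} (hγ : ContDiff ℝ n γ) (t : ℝ) (x : Fin d → ℤ) :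
    ContDiff ℝ n (planeWavePhase γ t x) :=
  (ContDiff.sum fun j _ => (contDiff_apply ℝ ℝ j).mul contDiff_const).sub (contDiff_const.mul hγ)

lemma TorusPeriodic.exp_planeWavePhase (hγ : TorusPeriodic γ) (t : ℝ) (x : Fin d → ℤ) :
    TorusPeriodic fun k => Complex.exp (Complex.I * planeWavePhase γ t x k) := fun k j => by
  have hshift : ∑ i, (k + Pi.single j (2 * π) : Fin d → ℝ) i * (x i : ℝ) =
      (∑ i, k i * (x i : ℝ)) + 2 * π * x j := by
    simp [add_mul, Finset.sum_add_distrib, Pi.single_apply]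
  rw [Complex.exp_eq_exp_iff_exists_int]
  refine ⟨x j, ?_⟩
  rw [planeWavePhase, hγ k j, hshift, planeWavePhase]
  push_cast
  ring

lemma dirDeriv_planeWavePhase (hγ : Differentiable ℝ γ) (t : ℝ) (x : Fin d → ℤ)
    (v : Fin d → ℝ) :
    dirDeriv v (planeWavePhase γ t x) =
      fun k => ∑ j, v j * (x j : ℝ) + (-2 * t) * dirDeriv v γ k := by
  ext k
  have hlin : dirDeriv v (fun y => ∑ j, y j * (x j : ℝ)) k = ∑ j, v j • (x j : ℝ) :=
    dirDeriv_sum_comp_apply fun j => hasDerivAt_mul_const (x j : ℝ)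
  have hsub : dirDeriv v (planeWavePhase γ t x) k =
      dirDeriv v (fun y => ∑ j, y j * (x j : ℝ)) k - 2 * t * dirDeriv v γ k := by
    have h := fderiv_fun_sub (𝕜 := ℝ) (x := k) (f := fun y : Fin d → ℝ => ∑ j, y j * (x j : ℝ))
      (by fun_prop) ((hγ k).const_mul (2 * t))
    simpa [dirDeriv, fderiv_const_mul (hγ k)] using! congrArg (· v) h
  rw [hsub, hlin]
  simp only [smul_eq_mul]
  ring

lemma dirDeriv_dirDeriv_planeWavePhase (hγ : ContDiff ℝ 2 γ) (t : ℝ) (x : Fin d → ℤ)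
    (v : Fin d → ℝ) :
    dirDeriv v (dirDeriv v (planeWavePhase γ t x)) =
      fun k => -2 * t * dirDeriv v (dirDeriv v γ) k := by
  have hDγ : ContDiff ℝ 1 (dirDeriv v γ) := contDiff_dirDeriv hγ (by norm_num) v
  rw [dirDeriv_planeWavePhase (hγ.differentiable two_ne_zero)]
  ext k
  exact dirDeriv_const_add_const_mul (hDγ.differentiable one_ne_zero k) _ _

/-- The `W^{1,1}(𝕋^d)` norm `‖∇η‖_{L¹} + ‖η‖_{L¹}`. -/
noncomputable def torusSobolevNorm (η : (Fin d → ℝ) → E) : ℝ :=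
  (∫ k in torusCell d, ∑ j, ‖dirDeriv (Pi.single j 1) η k‖) + ∫ k in torusCell d, ‖η k‖

lemma exists_integral_norm_smul_add_norm_dirDeriv_smul_le (hw : ContDiff ℝ 1 w)
    (v : Fin d → ℝ) :
    ∃ C, 0 ≤ C ∧ ∀ η : (Fin d → ℝ) → E, ContDiff ℝ 1 η →
      ∫ k in torusCell d, (‖w k • η k‖ + ‖dirDeriv v (fun y => w y • η y) k‖) ≤
        C * torusSobolevNorm η := by
  obtain ⟨A, hA, hwA⟩ := exists_pos_bound_on_torusCell hw.continuous
  obtain ⟨B, hB, hDwB⟩ := exists_pos_bound_on_torusCell (continuous_dirDeriv hw v)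
  refine ⟨A + B + A * ‖v‖, by positivity, fun η hη => ?_⟩
  have hwη := hw.smul hη
  have hDη : ∀ j, Continuous (dirDeriv (Pi.single j (1 : ℝ)) η) := fun j =>
    continuous_dirDeriv hη _
  have hηc := hη.continuous
  rw [torusSobolevNorm, ← integral_add (integrableOn_torusCell (by fun_prop))
    (integrableOn_torusCell (by fun_prop)), ← integral_const_mul]
  refine setIntegral_torusCell_mono (hwη.continuous.norm.add (continuous_dirDeriv hwη v).norm)
    (by fun_prop) fun k hk => ?_
  rw [dirDeriv_smul (hw.differentiable one_ne_zero k) (hη.differentiable one_ne_zero k)]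
  set N := ∑ j, ‖dirDeriv (Pi.single j 1) η k‖
  have hN : 0 ≤ N := by positivity
  calc _ ≤ ‖w k‖ * ‖η k‖ + (‖w k‖ * ‖dirDeriv v η k‖ + ‖dirDeriv v w k‖ * ‖η k‖) := by
        simp only [← norm_smul]
        gcongr
        exact norm_add_le _ _
    _ ≤ A * ‖η k‖ + (A * (‖v‖ * N) + B * ‖η k‖) := by
        gcongr
        exacts [hwA k hk, hwA k hk, norm_dirDeriv_le_norm_mul_sum v η k, hDwB k hk]
    _ ≤ (A + B + A * ‖v‖) * (N + ‖η k‖) := by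
        nlinarith [mul_nonneg (add_nonneg hA.le hB.le) hN,
          mul_nonneg (mul_nonneg hA.le (norm_nonneg v)) (norm_nonneg (η k))]

lemma norm_integral_exp_planeWavePhase_mul_sq_smul_le {B t : ℝ} {v : Fin d → ℝ}
    {ψ : (Fin d → ℝ) → ℂ} (hγ : ContDiff ℝ 3 γ) (hγp : TorusPeriodic γ) (hB : 0 < B)
    (hγ₂ : ∀ k ∈ torusCell d, ‖dirDeriv v (dirDeriv v γ) k‖ ≤ B)
    (hγ₃ : ∀ k ∈ torusCell d, ‖dirDeriv v (dirDeriv v (dirDeriv v γ)) k‖ ≤ B)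
    (hψ : ContDiff ℝ 1 ψ) (hψp : TorusPeriodic ψ) (ht : t ≠ 0) (x : Fin d → ℤ) :
    ‖∫ k in torusCell d, Complex.exp (Complex.I * planeWavePhase γ t x k) *
        (dirDeriv v (dirDeriv v γ) k ^ 2 • ψ k)‖ ≤
      (π + 1) * (B * √(2 * B) / 2) / √|t| *
        ∫ k in torusCell d, (‖ψ k‖ + ‖dirDeriv v ψ k‖) := by
  have ht' : 0 < |t| := abs_pos.2 ht
  have hD₂γ : ContDiff ℝ 1 (dirDeriv v (dirDeriv v γ)) :=
    contDiff_dirDeriv (contDiff_dirDeriv (m := 2) hγ (by norm_num) v) (by norm_num) v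
  have hD₂ := dirDeriv_dirDeriv_planeWavePhase (hγ.of_le (by norm_num)) t x v
  have hD₃ : dirDeriv v (dirDeriv v (dirDeriv v (planeWavePhase γ t x))) =
      fun k => -2 * t * dirDeriv v (dirDeriv v (dirDeriv v γ)) k := by
    rw [hD₂]
    ext k
    simpa using dirDeriv_const_add_const_mul (v := v) (hD₂γ.differentiable one_ne_zero k) 0 (-2 * t)
  have hscale : ∀ y : ℝ, ‖y‖ ≤ B → |-2 * t * y| ≤ |t| * (2 * B) := fun y hy => by
    rw [norm_eq_abs] at hy
    rw [abs_mul, abs_mul, abs_neg, abs_two]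
    nlinarith
  have hvdc := norm_integral_exp_mul_sq_smul_le (v := v) (M := |t| * (2 * B)) (by positivity)
    (contDiff_planeWavePhase hγ t x) (hγp.exp_planeWavePhase t x) hψ hψp
    (fun k hk => by simpa only [hD₂] using hscale _ (hγ₂ k hk))
    (fun k hk => by simpa only [hD₃] using hscale _ (hγ₃ k hk))
  set L := ∫ k in torusCell d, (‖ψ k‖ + ‖dirDeriv v ψ k‖)
  have hfactor : ∀ k, Complex.exp (Complex.I * planeWavePhase γ t x k) *
      ((-2 * t * dirDeriv v (dirDeriv v γ) k) ^ 2 • ψ k) = ((4 * t ^ 2 : ℝ) : ℂ) *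
        (Complex.exp (Complex.I * planeWavePhase γ t x k) *
          (dirDeriv v (dirDeriv v γ) k ^ 2 • ψ k)) := fun k => by
    simp only [Complex.real_smul]
    push_cast
    ring
  simp only [hD₂, hfactor, integral_const_mul] at hvdc
  rw [norm_mul, Complex.norm_of_nonneg (by positivity), ← le_div_iff₀' (by positivity)] at hvdc
  refine hvdc.trans_eq ?_
  rw [sqrt_mul ht'.le, ← sq_abs t]
  field_simp
  rw [sq_sqrt ht'.le]
  ring

lemma exists_norm_integral_exp_planeWavePhase_mul_sq_smul_le (hγ : ContDiff ℝ 3 γ)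
    (hγp : TorusPeriodic γ) (hw : ContDiff ℝ 1 w) (hwp : TorusPeriodic w) (v : Fin d → ℝ) :
    ∃ C, ∀ η : (Fin d → ℝ) → ℂ, ContDiff ℝ 1 η → TorusPeriodic η → ∀ t : ℝ, t ≠ 0 → ∀ x,
      ‖∫ k in torusCell d, Complex.exp (Complex.I * planeWavePhase γ t x k) *
          (dirDeriv v (dirDeriv v γ) k ^ 2 • (w k • η k))‖ ≤ C / √|t| * torusSobolevNorm η := by
  have hD₂γ : ContDiff ℝ 1 (dirDeriv v (dirDeriv v γ)) :=
    contDiff_dirDeriv (contDiff_dirDeriv (m := 2) hγ (by norm_num) v) (by norm_num) v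
  obtain ⟨B₂, hB₂, hγ₂⟩ := exists_pos_bound_on_torusCell hD₂γ.continuous
  obtain ⟨B₃, -, hγ₃⟩ := exists_pos_bound_on_torusCell (continuous_dirDeriv hD₂γ v)
  obtain ⟨A, -, hA⟩ := exists_integral_norm_smul_add_norm_dirDeriv_smul_le (E := ℂ) hw v
  set B := max B₂ B₃
  have hB : 0 < B := hB₂.trans_le (le_max_left _ _)
  refine ⟨(π + 1) * (B * √(2 * B) / 2) * A, fun η hη hηp t ht x => ?_⟩
  have hwηp : TorusPeriodic fun k => w k • η k := fun k j => by simp only [hwp k j, hηp k j]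
  calc _ ≤ (π + 1) * (B * √(2 * B) / 2) / √|t| *
          ∫ k in torusCell d, (‖w k • η k‖ + ‖dirDeriv v (fun y => w y • η y) k‖) :=
        norm_integral_exp_planeWavePhase_mul_sq_smul_le hγ hγp hB
          (fun k hk => (hγ₂ k hk).trans (le_max_left _ _))
          (fun k hk => (hγ₃ k hk).trans (le_max_right _ _)) (hw.smul hη) hwηp ht x
    _ ≤ (π + 1) * (B * √(2 * B) / 2) / √|t| * (A * torusSobolevNorm η) := by
        gcongr
        exact hA η hη
    _ = _ := by ring

/-- The weights `(∂ᵤ²γ)² / ∑ᵥ (∂ᵥ²γ)²` split the integral into parts on each of which a single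
direction is used. -/
lemma exists_norm_integral_exp_planeWavePhase_mul_le {U : Set (Fin d → ℝ)} (hU : U.Finite)
    (hγ : ContDiff ℝ 3 γ) (hγp : TorusPeriodic γ)
    (hnondeg : ∀ k, ∃ u ∈ U, dirDeriv u (dirDeriv u γ) k ≠ 0) :
    ∃ C, ∀ η : (Fin d → ℝ) → ℂ, ContDiff ℝ 1 η → TorusPeriodic η → ∀ t : ℝ, t ≠ 0 → ∀ x,
      ‖∫ k in torusCell d, Complex.exp (Complex.I * planeWavePhase γ t x k) * η k‖ ≤
        C / √|t| * torusSobolevNorm η := by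
  lift U to Finset (Fin d → ℝ) using hU
  set q : (Fin d → ℝ) → (Fin d → ℝ) → ℝ := fun u => dirDeriv u (dirDeriv u γ)
  have hq : ∀ u, ContDiff ℝ 1 (q u) := fun u =>
    contDiff_dirDeriv (contDiff_dirDeriv (m := 2) hγ (by norm_num) _) (by norm_num) _
  have hqp : ∀ u, TorusPeriodic (q u) := fun u => (hγp.dirDeriv _).dirDeriv _
  have hQ : ∀ k, ∑ u ∈ U, q u k ^ 2 ≠ 0 := fun k => by
    obtain ⟨u, hu, hne⟩ := hnondeg k
    exact (Finset.sum_pos' (fun l _ => sq_nonneg (q l k)) ⟨u, hu, sq_pos_of_ne_zero hne⟩).ne'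
  set w : (Fin d → ℝ) → ℝ := fun k => (∑ u ∈ U, q u k ^ 2)⁻¹ with hw_def
  have hw : ContDiff ℝ 1 w := (ContDiff.sum fun u _ => (hq u).pow 2).inv hQ
  have hwp : TorusPeriodic w := fun k j => by simp only [hw_def, hqp _ k j]
  choose C hC using
    exists_norm_integral_exp_planeWavePhase_mul_sq_smul_le hγ hγp hw hwp
  refine ⟨∑ u ∈ U, C u, fun η hη hηp t ht x => ?_⟩
  set e : (Fin d → ℝ) → ℂ := fun k => Complex.exp (Complex.I * planeWavePhase γ t x k)
  have hec : Continuous e := (contDiff_exp_I_mul (contDiff_planeWavePhase hγ t x)).continuous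
  have hunit : ∀ k, e k * η k = ∑ u ∈ U, e k * (q u k ^ 2 • (w k • η k)) := fun k => by
    rw [← Finset.mul_sum, ← Finset.sum_smul, smul_smul, mul_inv_cancel₀ (hQ k), one_smul]
  calc ‖∫ k in torusCell d, e k * η k‖
      = ‖∑ u ∈ U, ∫ k in torusCell d, e k * (q u k ^ 2 • (w k • η k))‖ := by
        simp only [hunit]
        rw [integral_finsetSum]
        exact fun u _ => integrableOn_torusCell
          (hec.mul (((hq u).pow 2).smul (hw.smul hη)).continuous)
    _ ≤ ∑ u ∈ U, C u / √|t| * torusSobolevNorm η :=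
        norm_sum_le_of_le _ fun u _ => hC u η hη hηp t ht x
    _ = _ := by rw [← Finset.sum_mul, ← Finset.sum_div]

end PlaneWave

section LatticeDispersion

variable {d : ℕ} {ω : ℝ} {lam : Fin d → ℝ} {i j : Fin d}

/-- The dispersion relation `γ` of the harmonic lattice with on-site frequency `ω` and couplings
`lam`. -/
noncomputable def latticeDispersion (ω : ℝ) (lam : Fin d → ℝ) (k : Fin d → ℝ) : ℝ :=
  √(ω ^ 2 + 4 * ∑ j, lam j * sin (k j / 2) ^ 2)

lemma latticeDispersion_radicand_pos (hω : ω ≠ 0) (hlam : ∀ j, 0 ≤ lam j) (k : Fin d → ℝ) :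
    0 < ω ^ 2 + 4 * ∑ j, lam j * sin (k j / 2) ^ 2 := by
  have hsum : 0 ≤ ∑ j, lam j * sin (k j / 2) ^ 2 :=
    Finset.sum_nonneg fun j _ => mul_nonneg (hlam j) (sq_nonneg _)
  positivity

lemma latticeDispersion_radicand_eq (ω : ℝ) (lam k : Fin d → ℝ) :
    ω ^ 2 + 4 * ∑ j, lam j * sin (k j / 2) ^ 2 =
      ω ^ 2 + 2 * ∑ j, lam j * (1 - cos (k j)) := by
  simp only [sin_sq_eq_half_sub, mul_div_cancel₀ _ (two_ne_zero' ℝ), Finset.mul_sum]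
  congr 1
  exact Finset.sum_congr rfl fun j _ => by ring

lemma torusPeriodic_latticeDispersion (ω : ℝ) (lam : Fin d → ℝ) :
    TorusPeriodic (latticeDispersion ω lam) := fun k j => by
  have hcos : ∀ i, cos ((k + Pi.single j (2 * π) : Fin d → ℝ) i) = cos (k i) := fun i => by
    rcases eq_or_ne i j with rfl | hij
    · simp
    · simp [hij]
  simp only [latticeDispersion, latticeDispersion_radicand_eq, hcos]

lemma contDiff_latticeDispersion {n : WithTop ℕ∞}
    (hpos : ∀ k : Fin d → ℝ, 0 < ω ^ 2 + 4 * ∑ j, lam j * sin (k j / 2) ^ 2) :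
    ContDiff ℝ n (latticeDispersion ω lam) := by
  refine ContDiff.sqrt ?_ fun k => (hpos k).ne'
  exact contDiff_const.add (contDiff_const.mul (ContDiff.sum fun j _ => contDiff_const.mul
    ((((contDiff_apply ℝ ℝ j).div_const 2).sin).pow 2)))

lemma latticeDispersion_mul_dirDeriv
    (hpos : ∀ k : Fin d → ℝ, 0 < ω ^ 2 + 4 * ∑ j, lam j * sin (k j / 2) ^ 2) (v k : Fin d → ℝ) :
    latticeDispersion ω lam k * dirDeriv v (latticeDispersion ω lam) k =
      ∑ j, v j * (lam j * sin (k j)) := by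
  set γ := latticeDispersion ω lam
  have hγ : ContDiff ℝ 1 γ := contDiff_latticeDispersion hpos
  have hsq : (fun y => γ y ^ 2) = fun y => ω ^ 2 + 2 * ∑ j, lam j * (1 - cos (y j)) := by
    ext y
    rw [← latticeDispersion_radicand_eq]
    exact sq_sqrt (hpos y).le
  have hsum : dirDeriv v (fun y : Fin d → ℝ => ∑ j, lam j * (1 - cos (y j))) k =
      ∑ j, v j • (lam j * sin (k j)) :=
    dirDeriv_sum_comp_apply fun j => by
      simpa using ((hasDerivAt_cos (k j)).const_sub 1).const_mul (lam j)
  have h := dirDeriv_comp (v := v) (hasDerivAt_pow 2 (γ k)) (hγ.differentiable one_ne_zero k)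
  rw [hsq, dirDeriv_const_add_const_mul (by fun_prop), hsum] at h
  simp only [smul_eq_mul, Nat.cast_ofNat, pow_one, Nat.add_one_sub_one] at h
  linarith

lemma dirDeriv_sq_add_latticeDispersion_mul_dirDeriv_dirDeriv
    (hpos : ∀ k : Fin d → ℝ, 0 < ω ^ 2 + 4 * ∑ j, lam j * sin (k j / 2) ^ 2) (v k : Fin d → ℝ) :
    dirDeriv v (latticeDispersion ω lam) k ^ 2 +
        latticeDispersion ω lam k * dirDeriv v (dirDeriv v (latticeDispersion ω lam)) k =
      ∑ j, v j * (v j * (lam j * cos (k j))) := by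
  set γ := latticeDispersion ω lam
  have hγ : ContDiff ℝ 2 γ := contDiff_latticeDispersion hpos
  have hDγ : ContDiff ℝ 1 (dirDeriv v γ) := contDiff_dirDeriv hγ (by norm_num) v
  have hsum : dirDeriv v (fun y : Fin d → ℝ => ∑ j, v j * (lam j * sin (y j))) k =
      ∑ j, v j • (v j * (lam j * cos (k j))) :=
    dirDeriv_sum_comp_apply fun j => ((hasDerivAt_sin (k j)).const_mul (lam j)).const_mul (v j)
  have h := dirDeriv_smul (v := v) (hγ.differentiable two_ne_zero k)
    (hDγ.differentiable one_ne_zero k)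
  simp only [smul_eq_mul, latticeDispersion_mul_dirDeriv hpos, γ] at h hsum
  rw [hsum] at h
  linear_combination -h

lemma dirDeriv_single_latticeDispersion_ne_zero
    (hpos : ∀ k : Fin d → ℝ, 0 < ω ^ 2 + 4 * ∑ j, lam j * sin (k j / 2) ^ 2) (hi : lam i ≠ 0)
    {k : Fin d → ℝ}
    (h₂ : dirDeriv (Pi.single i 1) (dirDeriv (Pi.single i 1) (latticeDispersion ω lam)) k = 0) :
    dirDeriv (Pi.single i 1) (latticeDispersion ω lam) k ≠ 0 := fun h₁ => by
  have hcos : cos (k i) = 0 := by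
    simpa [h₁, h₂, hi, Pi.single_apply] using
      (dirDeriv_sq_add_latticeDispersion_mul_dirDeriv_dirDeriv hpos (Pi.single i 1) k).symm
  have hsin : sin (k i) = 0 := by
    simpa [h₁, hi, Pi.single_apply] using
      (latticeDispersion_mul_dirDeriv hpos (Pi.single i 1) k).symm
  simpa [hcos, hsin] using sin_sq_add_cos_sq (k i)

lemma exists_dirDeriv_dirDeriv_latticeDispersion_ne_zero
    (hpos : ∀ k : Fin d → ℝ, 0 < ω ^ 2 + 4 * ∑ j, lam j * sin (k j / 2) ^ 2) (hij : i ≠ j)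
    (hi : lam i ≠ 0) (hj : lam j ≠ 0) (k : Fin d → ℝ) :
    ∃ v ∈ ({Pi.single i 1, Pi.single j 1, Pi.single i 1 + Pi.single j 1} : Set (Fin d → ℝ)),
      dirDeriv v (dirDeriv v (latticeDispersion ω lam)) k ≠ 0 := by
  by_contra! hzero
  set γ := latticeDispersion ω lam with hγ
  have hsq : ∀ v ∈ ({Pi.single i 1, Pi.single j 1, Pi.single i 1 + Pi.single j 1} :
      Set (Fin d → ℝ)), dirDeriv v γ k ^ 2 = ∑ l, v l * (v l * (lam l * cos (k l))) :=
    fun v hv => by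
      have h := dirDeriv_sq_add_latticeDispersion_mul_dirDeriv_dirDeriv hpos v k
      rwa [← hγ, hzero v hv, mul_zero, add_zero] at h
  have hi_sq : dirDeriv (Pi.single i 1) γ k ^ 2 = lam i * cos (k i) := by
    simpa [Pi.single_apply] using hsq (Pi.single i 1) (by simp)
  have hj_sq : dirDeriv (Pi.single j 1) γ k ^ 2 = lam j * cos (k j) := by
    simpa [Pi.single_apply] using hsq (Pi.single j 1) (by simp)
  have hsum_sq : (dirDeriv (Pi.single i 1) γ k + dirDeriv (Pi.single j 1) γ k) ^ 2 =
      lam i * cos (k i) + lam j * cos (k j) := by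
    have hadd : dirDeriv (Pi.single i 1 + Pi.single j 1) γ k =
        dirDeriv (Pi.single i 1) γ k + dirDeriv (Pi.single j 1) γ k := map_add _ _ _
    rw [← hadd, hsq _ (by simp)]
    simp [add_mul, mul_add, Finset.sum_add_distrib, Pi.single_apply, hij, hij.symm]
  have hprod : dirDeriv (Pi.single i 1) γ k * dirDeriv (Pi.single j 1) γ k = 0 := by linarith
  exact mul_ne_zero
    (dirDeriv_single_latticeDispersion_ne_zero hpos hi (hzero (Pi.single i 1) (by simp)))
    (dirDeriv_single_latticeDispersion_ne_zero hpos hj (hzero (Pi.single j 1) (by simp))) hprod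

end LatticeDispersion

theorem uniform_dispersive_estimate_general {d : ℕ} {ω : ℝ} {lam : Fin d → ℝ}
    (hpos : ∀ k : Fin d → ℝ, 0 < ω ^ 2 + 4 * ∑ j, lam j * sin (k j / 2) ^ 2) {i j : Fin d}
    (hij : i ≠ j) (hi : lam i ≠ 0) (hj : lam j ≠ 0) :
    ∃ C, ∀ η : (Fin d → ℝ) → ℂ, ContDiff ℝ 1 η → TorusPeriodic η →
      ∀ t : ℝ, t ≠ 0 → ∀ x : Fin d → ℤ,
        ‖∫ k in torusCell d, Complex.exp (Complex.I *
            planeWavePhase (latticeDispersion ω lam) t x k) * η k‖ ≤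
          C / √|t| * torusSobolevNorm η :=
  exists_norm_integral_exp_planeWavePhase_mul_le (Set.toFinite _)
    (contDiff_latticeDispersion hpos) (torusPeriodic_latticeDispersion ω lam)
    (exists_dirDeriv_dirDeriv_latticeDispersion_ne_zero hpos hij hi hj)

/-- Uniform dispersive estimate, `d ≥ 2`: with
`γ(k) = sqrt(ω² + 4∑ⱼ λⱼ sin²(kⱼ/2))` and phase `φ_{t,x}(k) = k·x − 2tγ(k)`,
for every `C¹`, `2π`-periodic amplitude `η` on the torus `(-π,π]^d` there is a
constant `C`, independent of `t` and `x ∈ ℤ^d`, such that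
`|∫_{𝕋^d} e^{iφ_{t,x}} η| ≤ C |t|^{-1/2} (‖∇η‖_{L¹} + ‖η‖_{L¹})` for `|t| ≥ 1`. -/
theorem uniform_dispersive_estimate (d : ℕ) (hd : 2 ≤ d) (ω : ℝ) (hω : 0 < ω)
    (lam : Fin d → ℝ) (hlam : ∀ j, 0 < lam j) (γ : (Fin d → ℝ) → ℝ)
    (hγ : ∀ k, γ k = Real.sqrt (ω ^ 2 + 4 * ∑ j, lam j * Real.sin (k j / 2) ^ 2))
    (η : (Fin d → ℝ) → ℂ) (hη : ContDiff ℝ 1 η)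
    (hper : ∀ (k : Fin d → ℝ) (j : Fin d), η (k + Pi.single j (2 * π)) = η k) :
    ∃ C : ℝ, ∀ (t : ℝ) (x : Fin d → ℤ), 1 ≤ |t| →
      ‖∫ k in (Set.univ.pi fun _ : Fin d => Set.Ioc (-π) π),
          Complex.exp (Complex.I *
            (((∑ j, k j * (x j : ℝ)) - 2 * t * γ k : ℝ) : ℂ)) * η k‖ ≤
        (C / Real.sqrt |t|) *
          ((∫ k in (Set.univ.pi fun _ : Fin d => Set.Ioc (-π) π),
              ∑ j, ‖fderiv ℝ η k (Pi.single j 1)‖) +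
           ∫ k in (Set.univ.pi fun _ : Fin d => Set.Ioc (-π) π), ‖η k‖) := by
  obtain rfl : γ = latticeDispersion ω lam := funext hγ
  obtain ⟨C, hC⟩ := uniform_dispersive_estimate_general
    (latticeDispersion_radicand_pos hω.ne' fun j => (hlam j).le)
    (i := ⟨0, by omega⟩) (j := ⟨1, by omega⟩) (by simp) (hlam _).ne' (hlam _).ne'
  exact ⟨C, fun t x ht => hC η hη hper t (abs_pos.1 (one_pos.trans_le ht)) x⟩
end
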